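/- arXiv:1210.3525 — 2 statements merged into one kernel-verified Lean document; each statement's English description precedes it below -/
import Mathlib

section
/- Let N ≥ 1 and let ω ∈ Ω be a 1-2 model configuration having at least 31 pairwise distinct infinite {001}-clusters each containing a vertex of the box B_{N+2}. Then there exists a 1-2 model configuration ω′ ∈ Ω such that ω′(e) = ω(e) for every edge e both of whose endpoints lie outside B_{N+4}, and B_N is an encounter box for ω′. -/
open MeasureTheory

/-- Vertices of the hexagonal lattice: `(x, y, t)` with `t = true` the "upper" vertex. -/
abbrev HexV : Type := ℤ × ℤ × Bool

/-- Edges of the hexagonal lattice: `(x, y, k)` with `k = 0` the a-type (horizontal) edge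
joining `(x,y,1)` to `(x,y,0)`, `k = 1` the b-type edge joining `(x,y,1)` to `(x+1,y,0)`,
`k = 2` the c-type edge joining `(x,y,1)` to `(x,y+1,0)`. -/
abbrev HexE : Type := ℤ × ℤ × Fin 3

/-- A configuration assigns present/absent to each edge. -/
abbrev Config : Type := HexE → Bool

def end1 (e : HexE) : HexV := (e.1, e.2.1, true)

def end2 (e : HexE) : HexV :=
  if e.2.2 = 0 then (e.1, e.2.1, false)
  else if e.2.2 = 1 then (e.1 + 1, e.2.1, false)
  else (e.1, e.2.1 + 1, false)

/-- The edges incident to a vertex, indexed so that index `0` is the a-type (horizontal)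
edge, index `1` the b-type edge, index `2` the c-type edge. -/
def edgesAt (v : HexV) : Fin 3 → HexE := fun i =>
  if v.2.2 then (v.1, v.2.1, i)
  else if i = 0 then (v.1, v.2.1, 0)
  else if i = 1 then (v.1 - 1, v.2.1, 1)
  else (v.1, v.2.1 - 1, 2)

/-- Local configuration of `ω` at `v`: digit `0` (rightmost) is the a-type edge,
digit `1` the b-type edge, digit `2` (leftmost) the c-type edge. -/
def localConf (ω : Config) (v : HexV) : Fin 3 → Bool := fun i => ω (edgesAt v i)

/-- A 1-2 model configuration: every vertex is incident to one or two present edges. -/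
def IsConfig (ω : Config) : Prop :=
  ∀ v : HexV,
    1 ≤ (Finset.univ.filter fun i : Fin 3 => localConf ω v i = true).card ∧
    (Finset.univ.filter fun i : Fin 3 => localConf ω v i = true).card ≤ 2

/-- The local configuration type `{001}` : only the a-type (horizontal) edge is present. -/
def conf001 : Fin 3 → Bool := ![true, false, false]

/-- The six admissible local configuration types `{001},…,{110}`. -/
def validConf (τ : Fin 3 → Bool) : Prop :=
  τ ≠ ![false, false, false] ∧ τ ≠ ![true, true, true]

/-- Vertex weight: `w(001)=w(110)=a`, `w(010)=w(101)=b`, `w(011)=w(100)=c`. -/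
def weight (a b c : ℝ) (f : Fin 3 → Bool) : ℝ :=
  match f 2, f 1, f 0 with
  | false, false, true  => a
  | true,  true,  false => a
  | false, true,  false => b
  | true,  false, true  => b
  | false, true,  true  => c
  | true,  false, false => c
  | false, false, false => 0
  | true,  true,  true  => 0

/-- Adjacency in the hexagonal lattice. -/
def HexAdj (v w : HexV) : Prop :=
  v ≠ w ∧ ∃ e : HexE, (v = end1 e ∨ v = end2 e) ∧ (w = end1 e ∨ w = end2 e)

/-- Adjacency restricted to a vertex set `S`. -/
def adjIn (S : Set HexV) (v w : HexV) : Prop := HexAdj v w ∧ v ∈ S ∧ w ∈ S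

/-- The connected component of `v` in the subgraph induced on `S`. -/
def compOf (S : Set HexV) (v : HexV) : Set HexV := {w | Relation.ReflTransGen (adjIn S) v w}

/-- `C` is a connected component of the subgraph induced on `S`. -/
def IsCompOf (S : Set HexV) (C : Set HexV) : Prop := ∃ v ∈ S, C = compOf S v

/-- Vertices whose local configuration equals `τ`. -/
def confSet (ω : Config) (τ : Fin 3 → Bool) : Set HexV := {v | localConf ω v = τ}

/-- A `τ`-cluster of `ω`. -/
def IsCluster (ω : Config) (τ : Fin 3 → Bool) (C : Set HexV) : Prop :=
  IsCompOf (confSet ω τ) C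

/-- The number of infinite `τ`-clusters of `ω`, as an extended natural number. -/
noncomputable def numInfClusters (ω : Config) (τ : Fin 3 → Bool) : ℕ∞ :=
  {C : Set HexV | IsCluster ω τ C ∧ C.Infinite}.encard

def endsFinset (e : HexE) : Finset HexV := {end1 e, end2 e}

/-- Vertices incident to an edge of `F`. -/
def verts (F : Finset HexE) : Finset HexV := F.biUnion endsFinset

/-- Edges sharing an endpoint with an edge of `F`. -/
def edgeNbhd (F : Finset HexE) : Set HexE :=
  {e' | ∃ e ∈ F,
    end1 e = end1 e' ∨ end1 e = end2 e' ∨ end2 e = end1 e' ∨ end2 e = end2 e'}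

/-- Cylinder event: configurations agreeing with `σ` on `S`. -/
def cyl (S : Set HexE) (σ : Config) : Set Config := {ω | ∀ e ∈ S, ω e = σ e}

/-- A Gibbs measure for the 1-2 model with weights `a`, `b`, `c`. -/
def IsGibbs (a b c : ℝ) (μ : Measure Config) : Prop :=
  IsProbabilityMeasure μ ∧ μ {ω | IsConfig ω} = 1 ∧
  ∀ F : Finset HexE, ∀ σ τ : Config, IsConfig σ → IsConfig τ →
    (∀ e ∉ F, σ e = τ e) →
    μ (cyl (↑F ∪ edgeNbhd F) σ) *
        ENNReal.ofReal (∏ v ∈ verts F, weight a b c (localConf τ v)) =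
      μ (cyl (↑F ∪ edgeNbhd F) τ) *
        ENNReal.ofReal (∏ v ∈ verts F, weight a b c (localConf σ v))

/-- Translation of edges by `g ∈ ℤ²`. -/
def shiftE (g : ℤ × ℤ) (e : HexE) : HexE := (e.1 + g.1, e.2.1 + g.2, e.2.2)

/-- Induced translation action on configurations. -/
def shiftConfig (g : ℤ × ℤ) (ω : Config) : Config := fun e => ω (shiftE g e)

/-- Translation invariance of a measure on configurations. -/
def TransInvariant (μ : Measure Config) : Prop :=
  ∀ g : ℤ × ℤ, μ.map (shiftConfig g) = μ

/-- Ergodicity: every translation-invariant measurable event has measure `0` or `1`. -/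
def IsErgodicTI (μ : Measure Config) : Prop :=
  ∀ A : Set Config, MeasurableSet A → (∀ g, shiftConfig g ⁻¹' A = A) → μ A = 0 ∨ μ A = 1

/-- The box `B_n(i,j)`. -/
def box (n : ℕ) (i j : ℤ) : Set HexV :=
  {v | |v.1 - i| ≤ (n : ℤ) ∧ |v.2.1 - j| ≤ (n : ℤ)}

/-- Vertices outside `B` adjacent to a vertex of `B`. -/
def outerBoundary (B : Set HexV) : Set HexV := {v | v ∉ B ∧ ∃ w ∈ B, HexAdj v w}

/-- `B_N(i,j)` is an encounter box for `ω` with respect to the infinite `{001}`-cluster `C`. -/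
def IsEncounterBoxWrt (ω : Config) (N : ℕ) (i j : ℤ) (C : Set HexV) : Prop :=
  IsCluster ω conf001 C ∧ C.Infinite ∧ box N i j ⊆ C ∧
  (∀ D, IsCompOf (C \ box (N + 2) i j) D → D.Infinite) ∧
  {D : Set HexV | IsCompOf (C \ box (N + 2) i j) D ∧ D.Infinite}.encard = 3

/-- `B_N(i,j)` is an encounter box for `ω`. -/
def IsEncounterBox (ω : Config) (N : ℕ) (i j : ℤ) : Prop :=
  ∃ C : Set HexV, IsEncounterBoxWrt ω N i j C

/-- A 3-partition of `Y`: an unordered triple of pairwise disjoint nonempty sets with union `Y`. -/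
def IsThreePartition {α : Type*} (Y : Set α) (P : Set (Set α)) : Prop :=
  ∃ P₁ P₂ P₃ : Set α, P = {P₁, P₂, P₃} ∧
    P₁.Nonempty ∧ P₂.Nonempty ∧ P₃.Nonempty ∧
    Disjoint P₁ P₂ ∧ Disjoint P₁ P₃ ∧ Disjoint P₂ P₃ ∧
    P₁ ∪ P₂ ∪ P₃ = Y

/-- Two 3-partitions are compatible if their parts can be ordered so that `Q₂ ∪ Q₃ ⊆ P₁`. -/
def CompatiblePartitions {α : Type*} (P Q : Set (Set α)) : Prop :=
  ∃ P₁ ∈ P, ∃ Q₁ ∈ Q, ∀ R ∈ Q, R ≠ Q₁ → R ⊆ P₁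

/-!
Inside `B_{N+2}` all a-type edges are switched on and, away from the sides, all b- and c-type
edges off, so that the interior becomes part of one `{001}`-cluster. Edges leaving the box are
untouched. A side vertex whose outward edge is absent gets one of its other edges, chosen along
the side, unless its outer neighbour is one of three chosen gates; where the outward edge is
present the side edge is absent. Hence away from the acute corners no vertex gets three edges, and
the interior cluster can only leave through a gate.

At the two acute corners of the box both a b-type and a c-type edge may be present at a vertex, so
the a-type edge there is switched off and the side edges are adapted to keep its other end valid.
This only works if no gate is among the 12 outer neighbours closest to these corners, which costs
at most 12 clusters: 15 infinite clusters meeting the box leave three that avoid the 12 forbidden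
positions, and each of them meets the outer boundary of the box at a vertex whose component
outside the box is infinite. These three vertices are the gates. The new central cluster minus the
box consists exactly of their three components, which are distinct since the original clusters
are.
-/

section Lattice

variable {ω : Config} {x y : ℤ} {v w : HexV}

theorem HexAdj.symm (h : HexAdj v w) : HexAdj w v :=
  let ⟨hne, e, hv, hw⟩ := h
  ⟨hne.symm, e, hw, hv⟩

theorem hexAdj_mk_true :
    HexAdj (x, y, true) v ↔ v = (x, y, false) ∨ v = (x + 1, y, false) ∨ v = (x, y + 1, false) := by
  constructor
  · rintro ⟨hne, ⟨x', y', k⟩, hx, hv⟩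
    fin_cases k <;> grind [end1, end2]
  · rintro (rfl | rfl | rfl)
    · exact ⟨by simp, (x, y, 0), .inl rfl, .inr rfl⟩
    · exact ⟨by simp, (x, y, 1), .inl rfl, .inr rfl⟩
    · exact ⟨by simp, (x, y, 2), .inl rfl, .inr rfl⟩

theorem hexAdj_mk_false :
    HexAdj (x, y, false) v ↔ v = (x, y, true) ∨ v = (x - 1, y, true) ∨ v = (x, y - 1, true) := by
  constructor
  · rintro ⟨hne, ⟨x', y', k⟩, hx, hv⟩
    fin_cases k <;> grind [end1, end2]
  · rintro (rfl | rfl | rfl)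
    · exact ⟨by simp, (x, y, 0), .inr rfl, .inl rfl⟩
    · exact ⟨by simp, (x - 1, y, 1), .inr (by simp [end2]), .inl rfl⟩
    · exact ⟨by simp, (x, y - 1, 2), .inr (by simp [end2]), .inl rfl⟩
theorem finite_setOf_hexAdj (v : HexV) : {w | HexAdj v w}.Finite := by
  obtain ⟨x, y, _ | _⟩ := v
  · exact (Set.toFinite {(x, y, true), (x - 1, y, true), (x, y - 1, true)}).subset
      fun _ h => hexAdj_mk_false.1 h
  · exact (Set.toFinite {(x, y, false), (x + 1, y, false), (x, y + 1, false)}).subset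
      fun _ h => hexAdj_mk_true.1 h

theorem mem_confSet_conf001 : v ∈ confSet ω conf001 ↔
    ω (edgesAt v 0) = true ∧ ω (edgesAt v 1) = false ∧ ω (edgesAt v 2) = false := by
  simp [confSet, localConf, conf001, funext_iff, Fin.forall_fin_succ]

theorem mk_true_mem_confSet_conf001 : (x, y, true) ∈ confSet ω conf001 ↔
    ω (x, y, 0) = true ∧ ω (x, y, 1) = false ∧ ω (x, y, 2) = false :=
  mem_confSet_conf001

theorem mk_false_mem_confSet_conf001 : (x, y, false) ∈ confSet ω conf001 ↔
    ω (x, y, 0) = true ∧ ω (x - 1, y, 1) = false ∧ ω (x, y - 1, 2) = false :=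
  mem_confSet_conf001

theorem isConfig_iff : IsConfig ω ↔ ∀ v : HexV,
    ¬(ω (edgesAt v 0) = ω (edgesAt v 1) ∧ ω (edgesAt v 1) = ω (edgesAt v 2)) := by
  have card_filter : ∀ f : Fin 3 → Bool,
      (1 ≤ (Finset.univ.filter fun i => f i = true).card ∧
        (Finset.univ.filter fun i => f i = true).card ≤ 2) ↔ ¬(f 0 = f 1 ∧ f 1 = f 2) := by
    decide
  exact forall_congr' fun v => card_filter (localConf ω v)

end Lattice

section Connectivity

variable {S T B K W : Set HexV} {u v w o : HexV}

theorem mem_compOf_self : v ∈ compOf S v :=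
  Relation.ReflTransGen.refl

theorem mem_compOf_symm (h : w ∈ compOf S v) : v ∈ compOf S w :=
  have : Std.Symm (adjIn S) := ⟨fun _ _ h => ⟨h.1.symm, h.2.2, h.2.1⟩⟩
  Std.Symm.symm _ _ h

theorem compOf_eq_of_mem (h : w ∈ compOf S v) : compOf S w = compOf S v :=
  Set.Subset.antisymm (fun _ hx => Relation.ReflTransGen.trans h hx)
    fun _ hx => Relation.ReflTransGen.trans (mem_compOf_symm h) hx

theorem mem_compOf_of_adjIn (hw : w ∈ compOf S v) (h : adjIn S w u) : u ∈ compOf S v :=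
  Relation.ReflTransGen.tail hw h

theorem compOf_subset_of_closed (hv : v ∈ K) (hK : ∀ a ∈ K, ∀ b, adjIn S a b → b ∈ K) :
    compOf S v ⊆ K := fun w hw => by
  induction hw with
  | refl => exact hv
  | tail _ hab ih => exact hK _ ih _ hab

theorem compOf_subset (hv : v ∈ S) : compOf S v ⊆ S :=
  compOf_subset_of_closed hv fun _ _ _ h => h.2.2

theorem compOf_mono (hTS : T ⊆ S) : compOf T v ⊆ compOf S v :=
  compOf_subset_of_closed mem_compOf_self fun _ ha _ h =>
    mem_compOf_of_adjIn ha ⟨h.1, hTS h.2.1, hTS h.2.2⟩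

theorem compOf_eq_of_subset (hTS : T ⊆ S) (h : compOf S v ⊆ T) : compOf T v = compOf S v := by
  refine (compOf_mono hTS).antisymm (compOf_subset_of_closed mem_compOf_self fun a ha b hab => ?_)
  have ha' : a ∈ compOf S v := compOf_mono hTS ha
  exact mem_compOf_of_adjIn ha ⟨hab.1, h ha', h (mem_compOf_of_adjIn ha' hab)⟩

theorem compOf_compOf_sdiff (hv : v ∈ S \ B) : compOf (compOf S v \ B) v = compOf (S \ B) v :=
  compOf_eq_of_subset (Set.sdiff_subset_sdiff_left (compOf_subset hv.1)) fun _ hx =>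
    ⟨compOf_mono Set.sdiff_subset hx, (compOf_subset hv hx).2⟩

theorem injOn_compOf_of_subset (hTS : T ⊆ S) (h : W.InjOn (compOf S)) : W.InjOn (compOf T) := by
  intro w hw w' hw' heq
  have hmem : w ∈ compOf T w' := heq ▸ mem_compOf_self
  exact h hw hw' (compOf_eq_of_mem (compOf_mono hTS hmem))

theorem subset_compOf_of_descent (rank : HexV → ℕ)
    (h : ∀ v ∈ K, v = o ∨ ∃ w ∈ K, HexAdj v w ∧ rank w < rank v) : K ⊆ compOf K o := by
  intro v
  induction hn : rank v using Nat.strong_induction_on generalizing v with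
  | _ n ih =>
    intro hv
    obtain rfl | ⟨w, hw, hvw, hlt⟩ := h v hv
    · exact mem_compOf_self
    · exact mem_compOf_of_adjIn (ih _ (hn ▸ hlt) rfl hw) ⟨hvw.symm, hw, hv⟩

theorem finite_outerBoundary (hB : B.Finite) : (outerBoundary B).Finite := by
  refine (hB.biUnion fun b _ => finite_setOf_hexAdj b).subset ?_
  rintro v ⟨-, b, hb, hvb⟩
  exact Set.mem_biUnion hb hvb.symm

theorem compOf_subset_union_iUnion_outerBoundary (hv : v ∈ B) :
    compOf S v ⊆ B ∪ ⋃ w ∈ compOf S v ∩ outerBoundary B, compOf (S \ B) w := by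
  suffices compOf S v ⊆
      compOf S v ∩ (B ∪ ⋃ w ∈ compOf S v ∩ outerBoundary B, compOf (S \ B) w) from
    this.trans Set.inter_subset_right
  refine compOf_subset_of_closed ⟨mem_compOf_self, .inl hv⟩ fun x ⟨hxv, hx⟩ y hxy => ?_
  have hyv := mem_compOf_of_adjIn hxv hxy
  refine ⟨hyv, ?_⟩
  by_cases hyB : y ∈ B
  · exact .inl hyB
  by_cases hxB : x ∈ B
  · exact .inr (Set.mem_biUnion ⟨hyv, hyB, x, hxB, hxy.1.symm⟩ mem_compOf_self)
  obtain ⟨w, hw, hxw⟩ := Set.mem_iUnion₂.1 (hx.resolve_left hxB)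
  exact .inr (Set.mem_biUnion hw
    (mem_compOf_of_adjIn hxw ⟨hxy.1, ⟨hxy.2.1, hxB⟩, hxy.2.2, hyB⟩))

theorem exists_outerBoundary_infinite_compOf (hB : B.Finite)
    (hinf : (compOf S v).Infinite) (hmeet : (compOf S v ∩ B).Nonempty) :
    ∃ w ∈ compOf S v ∩ outerBoundary B, (compOf (S \ B) w).Infinite := by
  obtain ⟨b, hbv, hbB⟩ := hmeet
  rw [← compOf_eq_of_mem hbv] at hinf ⊢
  by_contra! hfin
  have hgates : (compOf S b ∩ outerBoundary B).Finite :=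
    (finite_outerBoundary hB).subset Set.inter_subset_right
  exact hinf ((hB.union (hgates.biUnion hfin)).subset
    (compOf_subset_union_iUnion_outerBoundary hbB))

theorem exists_gates {X : Set HexV} {k : ℕ∞} (hB : B.Finite) (hX : X.Finite)
    (hcard : X.encard + k ≤
      {C | IsCompOf S C ∧ C.Infinite ∧ (C ∩ B).Nonempty}.encard) :
    ∃ W ⊆ S ∩ outerBoundary B, W.encard = k ∧ W.InjOn (compOf S) ∧
      ∀ w ∈ W, (compOf (S \ B) w).Infinite ∧ Disjoint (compOf S w) X := by
  set P := {C | IsCompOf S C ∧ C.Infinite ∧ (C ∩ B).Nonempty}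
  have hexists : ∀ C ∈ P, ∃ w ∈ S ∩ outerBoundary B, compOf S w = C ∧
      (compOf (S \ B) w).Infinite := by
    rintro _ ⟨⟨v, hv, rfl⟩, hinf, hmeet⟩
    obtain ⟨w, ⟨hwv, hwB⟩, hw⟩ := exists_outerBoundary_infinite_compOf hB hinf hmeet
    exact ⟨w, ⟨compOf_subset hv hwv, hwB⟩, compOf_eq_of_mem hwv, hw⟩
  choose! gate hgate hcomp hinf using hexists
  have hk : k ≤ (P \ compOf S '' X).encard := by
    calc
      k ≤ P.encard - X.encard := ENat.le_sub_of_add_le_left hX.encard_lt_top.ne hcard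
      _ ≤ P.encard - (compOf S '' X).encard := tsub_le_tsub_left (Set.encard_image_le _ _) _
      _ ≤ (P \ compOf S '' X).encard := Set.tsub_encard_le_encard_sdiff _ _
  obtain ⟨Q, hQ, hQk⟩ := Set.exists_subset_encard_eq hk
  have hinj : Q.InjOn gate := fun C hC D hD h => by
    rw [← hcomp C (hQ hC).1, h, hcomp D (hQ hD).1]
  refine ⟨gate '' Q, ?_, by rw [hinj.encard_image, hQk], ?_, ?_⟩
  · rintro _ ⟨C, hC, rfl⟩
    exact hgate C (hQ hC).1
  · rintro _ ⟨C, hC, rfl⟩ _ ⟨D, hD, rfl⟩ h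
    rw [← hcomp C (hQ hC).1, h, hcomp D (hQ hD).1]
  · rintro _ ⟨C, hC, rfl⟩
    refine ⟨hinf C (hQ hC).1, Set.disjoint_left.2 fun x hx hxX => (hQ hC).2 ⟨x, hxX, ?_⟩⟩
    rw [compOf_eq_of_mem hx, hcomp C (hQ hC).1]

theorem setOf_isCompOf_compOf_sdiff (ho : o ∈ S) (hW : W ⊆ compOf S o \ B)
    (hcover : compOf S o \ B ⊆ ⋃ w ∈ W, compOf (S \ B) w) :
    {D | IsCompOf (compOf S o \ B) D} = compOf (S \ B) '' W := by
  have hcomp : ∀ v ∈ compOf S o \ B, compOf (compOf S o \ B) v = compOf (S \ B) v :=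
    fun v hv => compOf_eq_of_mem hv.1 ▸ compOf_compOf_sdiff ⟨compOf_subset ho hv.1, hv.2⟩
  ext D
  constructor
  · rintro ⟨v, hv, rfl⟩
    obtain ⟨w, hw, hvw⟩ := Set.mem_iUnion₂.1 (hcover hv)
    exact ⟨w, hw, by rw [hcomp v hv, compOf_eq_of_mem hvw]⟩
  · rintro ⟨w, hw, rfl⟩
    exact ⟨w, hW hw, (hcomp w (hW hw)).symm⟩

end Connectivity

/-- A rectangle of cells `(x, y)` of the hexagonal lattice, both bounds included, with at least five
columns and five rows so that the surgeries at its corners do not interfere. -/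
structure LatticeRect where
  left : ℤ
  right : ℤ
  bottom : ℤ
  top : ℤ
  width : left + 4 ≤ right
  height : bottom + 4 ≤ top

namespace LatticeRect

section Regions

variable (R : LatticeRect)

/-- The lattice vertices in the cells of the rectangle. -/
def vertices : Set HexV :=
  {v | (R.left ≤ v.1 ∧ v.1 ≤ R.right) ∧ R.bottom ≤ v.2.1 ∧ v.2.1 ≤ R.top}

/-- The vertices that the surgery puts into one `{001}`-cluster: those off the sides, without the
two that may lose their type to a correction at an acute corner. -/
def core : Set HexV :=
  {v | (R.left < v.1 ∧ v.1 < R.right) ∧ (R.bottom < v.2.1 ∧ v.2.1 < R.top) ∧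
    v ≠ (R.right - 1, R.top - 1, true) ∧ v ≠ (R.left + 1, R.bottom + 1, false)}

/-- The base point of the core, its lower right vertex. -/
def hub : HexV := (R.right - 1, R.bottom + 1, false)

/-- The vertices at the two acute corners, top right and bottom left, where the surgery may leave
both the b- and the c-type edge present. Only there is the a-type edge switched off. -/
def tips : Set HexV :=
  {(R.right, R.top, true), (R.right - 1, R.top, true),
    (R.left, R.bottom, false), (R.left + 1, R.bottom, false)}

/-- The outer neighbours of the last three vertices of each side at an acute corner. No gate may be
placed here. -/
def cornerExits : Finset HexV :=
  [(R.right + 1, R.top, false), (R.right + 1, R.top - 1, false), (R.right + 1, R.top - 2, false),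
    (R.right, R.top + 1, false), (R.right - 1, R.top + 1, false), (R.right - 2, R.top + 1, false),
    (R.left - 1, R.bottom, true), (R.left - 1, R.bottom + 1, true),
    (R.left - 1, R.bottom + 2, true), (R.left, R.bottom - 1, true),
    (R.left + 1, R.bottom - 1, true), (R.left + 2, R.bottom - 1, true)].toFinset

variable {R}

theorem mk_mem_vertices {x y : ℤ} {t : Bool} : (x, y, t) ∈ R.vertices ↔
    (R.left ≤ x ∧ x ≤ R.right) ∧ R.bottom ≤ y ∧ y ≤ R.top :=
  Iff.rfl

theorem mk_mem_core {x y : ℤ} {t : Bool} : (x, y, t) ∈ R.core ↔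
    (R.left < x ∧ x < R.right) ∧ (R.bottom < y ∧ y < R.top) ∧
      ¬(x = R.right - 1 ∧ y = R.top - 1 ∧ t = true) ∧
      ¬(x = R.left + 1 ∧ y = R.bottom + 1 ∧ t = false) := by
  simp only [core, Set.mem_ofPred_eq, ne_eq, Prod.mk.injEq]

theorem finite_vertices : R.vertices.Finite := by
  refine ((Set.finite_Icc R.left R.right).prod
    ((Set.finite_Icc R.bottom R.top).prod (Set.toFinite Set.univ))).subset ?_
  exact fun v hv => ⟨hv.1, hv.2, Set.mem_univ _⟩

theorem encard_cornerExits_le : (R.cornerExits : Set HexV).encard ≤ 12 := by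
  rw [Set.encard_coe_eq_coe_finsetCard]
  exact_mod_cast List.toFinset_card_le _

theorem notMem_vertices_of_mem_cornerExits : ∀ v ∈ R.cornerExits, v ∉ R.vertices := by
  simp only [cornerExits, List.mem_toFinset, List.forall_mem_cons, mk_mem_vertices,
    List.not_mem_nil, false_imp_iff, implies_true, and_true]
  omega

theorem core_subset_vertices : R.core ⊆ R.vertices :=
  fun _ ⟨hx, hy, _⟩ => ⟨⟨hx.1.le, hx.2.le⟩, hy.1.le, hy.2.le⟩

theorem hub_mem_core : R.hub ∈ R.core := by
  have := R.width
  have := R.height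
  rw [hub, mk_mem_core]
  grind

theorem hub_notMem_tips : R.hub ∉ R.tips := by
  simp only [hub, tips, Set.mem_insert_iff, Set.mem_singleton_iff, Prod.mk.injEq]
  grind

/-- The rank is the length of the path that goes right along a row to the last column and then
down to the hub. -/
theorem core_subset_compOf_hub : R.core ⊆ compOf R.core R.hub := by
  let rank : HexV → ℕ := fun (x, y, t) =>
    (2 * (R.right - x) + 2 * (y - R.bottom) + if t = true ↔ x = R.right - 1 then 1 else 0).toNat
  refine subset_compOf_of_descent rank ?_
  have := R.width
  rintro ⟨x, y, _ | _⟩ hv <;> rw [mk_mem_core] at hv <;> by_cases hx : x = R.right - 1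
  · by_cases hy : y = R.bottom + 1
    · exact .inl (by rw [hx, hy, hub])
    · refine .inr ⟨(x, y - 1, true), ?_, hexAdj_mk_false.2 (.inr (.inr rfl)), ?_⟩
      · rw [mk_mem_core]; grind
      · grind
  · refine .inr ⟨(x, y, true), ?_, hexAdj_mk_false.2 (.inl rfl), ?_⟩
    · rw [mk_mem_core]; grind
    · grind
  · refine .inr ⟨(x, y, false), ?_, hexAdj_mk_true.2 (.inl rfl), ?_⟩
    · rw [mk_mem_core]; grind
    · grind
  · refine .inr ⟨(x + 1, y, false), ?_, hexAdj_mk_true.2 (.inr (.inl rfl)), ?_⟩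
    · rw [mk_mem_core]; grind
    · grind

end Regions

section Surgery

variable (R : LatticeRect) (W : Set HexV) (ω : Config)

open Classical in
/-- The state of the side edge of a boundary vertex whose outward edge `e` leads to `v`: exactly
one of the two edges is present, unless `v` belongs to the set `W` of gates, in which case the
side edge is absent. -/
noncomputable def plug (e : HexE) (v : HexV) : Bool :=
  !ω e && decide (v ∉ W)

/-- The modified b-type edge at `(x, y, 1)`. In the top and bottom rows it is a plug, except that
the edge nearest an acute corner copies an outward edge: it shares the partner of a tip (the other
end of the a-type edge) with the plug of that outward edge, so exactly one of the two is present. -/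
noncomputable def surgeryB (x y : ℤ) : Bool :=
  if x < R.left ∨ R.right ≤ x ∨ y < R.bottom ∨ R.top < y then ω (x, y, 1)
  else if y = R.top then
    if x = R.right - 1 then ω (R.right, R.top - 1, 1) else plug W ω (x, y, 2) (x, y + 1, false)
  else if y = R.bottom then
    if x = R.left then ω (R.left - 1, R.bottom + 1, 1)
    else plug W ω (x + 1, y - 1, 2) (x + 1, y - 1, true)
  else false

/-- The modified c-type edge at `(x, y, 1)`, a plug in the left and right columns. The two copies
of outward edges play the same role as in `surgeryB`, for the other tip of each acute corner. -/
noncomputable def surgeryC (x y : ℤ) : Bool :=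
  if x < R.left ∨ R.right < x ∨ y < R.bottom ∨ R.top ≤ y then ω (x, y, 2)
  else if x = R.right then plug W ω (x, y, 1) (x + 1, y, false)
  else if x = R.left then plug W ω (x - 1, y + 1, 1) (x - 1, y + 1, true)
  else if x = R.right - 1 ∧ y = R.top - 1 then ω (R.right - 2, R.top, 2)
  else if x = R.left + 1 ∧ y = R.bottom then ω (R.left + 2, R.bottom - 1, 2)
  else false

/-- The modified a-type edge of the cell `(x, y)`, absent inside the rectangle exactly when one of
its ends has both other edges present. -/
noncomputable def surgeryA (x y : ℤ) : Bool :=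
  if x < R.left ∨ R.right < x ∨ y < R.bottom ∨ R.top < y then ω (x, y, 0)
  else !(R.surgeryB W ω x y && R.surgeryC W ω x y) &&
    !(R.surgeryB W ω (x - 1) y && R.surgeryC W ω x (y - 1))

/-- The modified configuration, obtained from `ω` by changing only edges with both ends in the
rectangle. -/
noncomputable def surgery : Config := fun (x, y, k) =>
  ![R.surgeryA W ω x y, R.surgeryB W ω x y, R.surgeryC W ω x y] k

variable {R W ω} {u v w : HexV} {x y : ℤ}

theorem surgery_mk_zero : R.surgery W ω (x, y, 0) = R.surgeryA W ω x y := rfl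

theorem surgery_mk_one : R.surgery W ω (x, y, 1) = R.surgeryB W ω x y := rfl

theorem surgery_mk_two : R.surgery W ω (x, y, 2) = R.surgeryC W ω x y := rfl

theorem surgery_eq_of_end1_notMem {e : HexE} (he : end1 e ∉ R.vertices) :
    R.surgery W ω e = ω e := by
  obtain ⟨x, y, k⟩ := e
  rw [end1, mk_mem_vertices] at he
  dsimp only at he
  fin_cases k
  · exact if_pos (by omega)
  · exact if_pos (by omega)
  · exact if_pos (by omega)

theorem surgery_eq_of_end2_notMem {e : HexE} (he : end2 e ∉ R.vertices) :
    R.surgery W ω e = ω e := by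
  obtain ⟨x, y, k⟩ := e
  fin_cases k
  · change (x, y, false) ∉ R.vertices at he
    rw [mk_mem_vertices] at he
    exact if_pos (by omega)
  · change (x + 1, y, false) ∉ R.vertices at he
    rw [mk_mem_vertices] at he
    exact if_pos (by omega)
  · change (x, y + 1, false) ∉ R.vertices at he
    rw [mk_mem_vertices] at he
    exact if_pos (by omega)

theorem surgery_edgesAt_of_notMem (hv : v ∉ R.vertices) (i : Fin 3) :
    R.surgery W ω (edgesAt v i) = ω (edgesAt v i) := by
  obtain ⟨x, y, _ | _⟩ := v
  · refine surgery_eq_of_end2_notMem ?_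
    fin_cases i <;> simpa [edgesAt, end2] using hv
  · exact surgery_eq_of_end1_notMem hv

theorem mem_confSet_surgery_iff (hv : v ∉ R.vertices) :
    v ∈ confSet (R.surgery W ω) conf001 ↔ v ∈ confSet ω conf001 := by
  simp only [mem_confSet_conf001, surgery_edgesAt_of_notMem hv]

theorem mk_true_mem_tips_of_surgery (hv : (x, y, true) ∈ R.vertices)
    (hB : R.surgeryB W ω x y = true) (hC : R.surgeryC W ω x y = true) : (x, y, true) ∈ R.tips := by
  have := R.height
  rw [mk_mem_vertices] at hv
  simp only [tips, Set.mem_insert_iff, Set.mem_singleton_iff, Prod.mk.injEq]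
  simp only [surgeryB, surgeryC, plug] at hB hC
  grind

theorem mk_false_mem_tips_of_surgery (hv : (x, y, false) ∈ R.vertices)
    (hB : R.surgeryB W ω (x - 1) y = true) (hC : R.surgeryC W ω x (y - 1) = true) :
    (x, y, false) ∈ R.tips := by
  have := R.width
  have := R.height
  rw [mk_mem_vertices] at hv
  simp only [tips, Set.mem_insert_iff, Set.mem_singleton_iff, Prod.mk.injEq]
  simp only [surgeryB, surgeryC, plug] at hB hC
  grind

theorem surgeryC_eq_not_surgeryB_left (hW : ∀ v ∈ R.cornerExits, v ∉ W)
    (hv : (x, y, true) ∈ R.tips) :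
    R.surgeryC W ω x (y - 1) = !R.surgeryB W ω (x - 1) y := by
  have := R.width
  have := R.height
  simp only [cornerExits, List.mem_toFinset, List.forall_mem_cons] at hW
  simp only [tips, Set.mem_insert_iff, Set.mem_singleton_iff, Prod.mk.injEq] at hv
  simp only [surgeryB, surgeryC, plug]
  grind

theorem surgeryC_eq_not_surgeryB_right (hW : ∀ v ∈ R.cornerExits, v ∉ W)
    (hv : (x, y, false) ∈ R.tips) : R.surgeryC W ω x y = !R.surgeryB W ω x y := by
  have := R.width
  have := R.height
  simp only [cornerExits, List.mem_toFinset, List.forall_mem_cons] at hW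
  simp only [tips, Set.mem_insert_iff, Set.mem_singleton_iff, Prod.mk.injEq] at hv
  simp only [surgeryB, surgeryC, plug]
  grind

theorem isConfig_surgery (hω : IsConfig ω) (hW : ∀ v ∈ R.cornerExits, v ∉ W) :
    IsConfig (R.surgery W ω) := by
  rw [isConfig_iff] at hω ⊢
  intro v
  by_cases hv : v ∈ R.vertices
  · obtain ⟨x, y, t⟩ := v
    have hleft (hB : R.surgeryB W ω x y = true) (hC : R.surgeryC W ω x y = true) :=
      surgeryC_eq_not_surgeryB_left (ω := ω) hW (mk_true_mem_tips_of_surgery hv hB hC)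
    have hright (hB : R.surgeryB W ω (x - 1) y = true) (hC : R.surgeryC W ω x (y - 1) = true) :=
      surgeryC_eq_not_surgeryB_right (ω := ω) hW (mk_false_mem_tips_of_surgery hv hB hC)
    have hA : R.surgery W ω (x, y, 0) = (!(R.surgeryB W ω x y && R.surgeryC W ω x y) &&
        !(R.surgeryB W ω (x - 1) y && R.surgeryC W ω x (y - 1))) :=
      if_neg (by rw [mk_mem_vertices] at hv; omega)
    cases t <;>
      simp only [edgesAt, hA, surgery_mk_one, surgery_mk_two, Bool.false_eq_true, ↓reduceIte,
        one_ne_zero, Fin.reduceEq] <;>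
      grind
  · simp only [surgery_edgesAt_of_notMem hv]
    exact hω v

theorem core_subset_confSet_surgery : R.core ⊆ confSet (R.surgery W ω) conf001 := by
  rintro ⟨x, y, _ | _⟩ hv <;>
    simp only [mk_mem_core, mk_true_mem_confSet_conf001, mk_false_mem_confSet_conf001,
      surgery_mk_zero, surgery_mk_one, surgery_mk_two, surgeryA, surgeryB, surgeryC] at * <;>
    grind

theorem mem_of_hexAdj_of_notMem_vertices (hu : u ∈ confSet (R.surgery W ω) conf001)
    (huR : u ∈ R.vertices) (hut : u ∉ R.tips) (hv : v ∉ R.vertices) (huv : HexAdj u v) :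
    v ∈ W := by
  have := R.width
  have := R.height
  obtain ⟨x, y, _ | _⟩ := u <;>
    simp only [hexAdj_mk_true, hexAdj_mk_false, mk_true_mem_confSet_conf001,
      mk_false_mem_confSet_conf001, surgery_mk_one, surgery_mk_two, tips, Set.mem_insert_iff,
      Set.mem_singleton_iff, Prod.mk.injEq] at hu hut huv <;>
    obtain ⟨-, hB, hC⟩ := hu <;>
    rcases huv with rfl | rfl | rfl <;>
    simp only [surgeryB, surgeryC, plug, mk_mem_vertices] at * <;>
    grind (splits := 40)

theorem mem_cornerExits_of_hexAdj_tip (hW : ∀ v ∈ R.cornerExits, v ∉ W) (hu : u ∈ R.tips)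
    (hv : v ∈ confSet (R.surgery W ω) conf001) (huv : HexAdj u v) : v ∈ R.cornerExits := by
  have := R.width
  have := R.height
  simp only [cornerExits, List.mem_toFinset, List.forall_mem_cons] at hW
  rcases hu with rfl | rfl | rfl | rfl <;>
    simp only [hexAdj_mk_true, hexAdj_mk_false] at huv <;>
    rcases huv with rfl | rfl | rfl <;>
    simp only [mk_true_mem_confSet_conf001, mk_false_mem_confSet_conf001, cornerExits,
      surgery_mk_zero, surgery_mk_one, surgery_mk_two, List.mem_toFinset, List.mem_cons,
      Prod.mk.injEq, surgeryA, surgeryB, surgeryC, plug] at hv ⊢ <;>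
    grind (splits := 40)

theorem path_from_right_gate (hy : R.bottom ≤ y ∧ y ≤ R.top)
    (hw : (R.right + 1, y, false) ∈ W) (hwω : (R.right + 1, y, false) ∈ confSet ω conf001)
    (hwc : (R.right + 1, y, false) ∉ R.cornerExits) :
    (R.right, y, true) ∈ confSet (R.surgery W ω) conf001 ∧
      (R.right, y + 1, false) ∈ confSet (R.surgery W ω) conf001 ∧
      (R.right - 1, y + 1, true) ∈ R.core := by
  have := R.width
  simp only [cornerExits, List.mem_toFinset, List.mem_cons, Prod.mk.injEq, List.not_mem_nil,
    or_false, not_or] at hwc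
  simp only [mk_true_mem_confSet_conf001, mk_false_mem_confSet_conf001, surgery_mk_zero,
    surgery_mk_one, surgery_mk_two, surgeryA, surgeryB, surgeryC, plug, mk_mem_core,
    add_sub_cancel_right] at hwω ⊢
  grind (splits := 40)

theorem path_from_top_gate (hx : R.left ≤ x ∧ x ≤ R.right)
    (hw : (x, R.top + 1, false) ∈ W) (hwω : (x, R.top + 1, false) ∈ confSet ω conf001)
    (hwc : (x, R.top + 1, false) ∉ R.cornerExits) :
    (x, R.top, true) ∈ confSet (R.surgery W ω) conf001 ∧
      (x + 1, R.top, false) ∈ confSet (R.surgery W ω) conf001 ∧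
      (x + 1, R.top - 1, true) ∈ R.core := by
  have := R.height
  simp only [cornerExits, List.mem_toFinset, List.mem_cons, Prod.mk.injEq, List.not_mem_nil,
    or_false, not_or] at hwc
  simp only [mk_true_mem_confSet_conf001, mk_false_mem_confSet_conf001, surgery_mk_zero,
    surgery_mk_one, surgery_mk_two, surgeryA, surgeryB, surgeryC, plug, mk_mem_core,
    add_sub_cancel_right] at hwω ⊢
  grind (splits := 40)

theorem path_from_left_gate (hy : R.bottom ≤ y ∧ y ≤ R.top)
    (hw : (R.left - 1, y, true) ∈ W) (hwω : (R.left - 1, y, true) ∈ confSet ω conf001)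
    (hwc : (R.left - 1, y, true) ∉ R.cornerExits) :
    (R.left, y, false) ∈ confSet (R.surgery W ω) conf001 ∧
      (R.left, y - 1, true) ∈ confSet (R.surgery W ω) conf001 ∧
      (R.left + 1, y - 1, false) ∈ R.core := by
  have := R.width
  simp only [cornerExits, List.mem_toFinset, List.mem_cons, Prod.mk.injEq, List.not_mem_nil,
    or_false, not_or] at hwc
  simp only [mk_true_mem_confSet_conf001, mk_false_mem_confSet_conf001, surgery_mk_zero,
    surgery_mk_one, surgery_mk_two, surgeryA, surgeryB, surgeryC, plug, mk_mem_core] at hwω ⊢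
  grind (splits := 40)

theorem path_from_bottom_gate (hx : R.left ≤ x ∧ x ≤ R.right)
    (hw : (x, R.bottom - 1, true) ∈ W) (hwω : (x, R.bottom - 1, true) ∈ confSet ω conf001)
    (hwc : (x, R.bottom - 1, true) ∉ R.cornerExits) :
    (x, R.bottom, false) ∈ confSet (R.surgery W ω) conf001 ∧
      (x - 1, R.bottom, true) ∈ confSet (R.surgery W ω) conf001 ∧
      (x - 1, R.bottom + 1, false) ∈ R.core := by
  have := R.height
  simp only [cornerExits, List.mem_toFinset, List.mem_cons, Prod.mk.injEq, List.not_mem_nil,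
    or_false, not_or] at hwc
  simp only [mk_true_mem_confSet_conf001, mk_false_mem_confSet_conf001, surgery_mk_zero,
    surgery_mk_one, surgery_mk_two, surgeryA, surgeryB, surgeryC, plug, mk_mem_core] at hwω ⊢
  grind (splits := 40)

theorem exists_path_to_core (hw : w ∈ W) (hwω : w ∈ confSet ω conf001) (hwc : w ∉ R.cornerExits)
    (hwR : w ∈ outerBoundary R.vertices) :
    ∃ u u' v, (u ∈ confSet (R.surgery W ω) conf001 ∧ u' ∈ confSet (R.surgery W ω) conf001 ∧
      v ∈ R.core) ∧ HexAdj w u ∧ HexAdj u u' ∧ HexAdj u' v := by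
  obtain ⟨x, y, t⟩ := w
  obtain ⟨hwR, u, huR, hu⟩ := hwR
  cases t <;> simp only [hexAdj_mk_true, hexAdj_mk_false] at hu <;>
    rcases hu with rfl | rfl | rfl <;> rw [mk_mem_vertices] at hwR huR
  · omega
  · obtain rfl : x = R.right + 1 := by omega
    exact ⟨_, _, _, path_from_right_gate huR.2 hw hwω hwc,
      by simp [hexAdj_mk_true, hexAdj_mk_false]⟩
  · obtain rfl : y = R.top + 1 := by omega
    exact ⟨_, _, _, path_from_top_gate huR.1 hw hwω hwc,
      by simp [hexAdj_mk_true, hexAdj_mk_false]⟩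
  · omega
  · obtain rfl : x = R.left - 1 := by omega
    exact ⟨_, _, _, path_from_left_gate huR.2 hw hwω hwc,
      by simp [hexAdj_mk_true, hexAdj_mk_false]⟩
  · obtain rfl : y = R.bottom - 1 := by omega
    exact ⟨_, _, _, path_from_bottom_gate huR.1 hw hwω hwc,
      by simp [hexAdj_mk_true, hexAdj_mk_false]⟩

theorem confSet_surgery_sdiff_vertices :
    confSet (R.surgery W ω) conf001 \ R.vertices = confSet ω conf001 \ R.vertices := by
  ext v
  exact and_congr_left mem_confSet_surgery_iff

theorem core_subset_compOf_surgery_hub :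
    R.core ⊆ compOf (confSet (R.surgery W ω) conf001) R.hub :=
  core_subset_compOf_hub.trans (compOf_mono core_subset_confSet_surgery)

theorem subset_compOf_surgery_hub (hW : ∀ v ∈ R.cornerExits, v ∉ W)
    (hWω : W ⊆ confSet ω conf001 ∩ outerBoundary R.vertices) :
    W ⊆ compOf (confSet (R.surgery W ω) conf001) R.hub := by
  intro w hw
  obtain ⟨hwω, hwR⟩ := hWω hw
  have hwS := (mem_confSet_surgery_iff (W := W) hwR.1).2 hwω
  obtain ⟨u, u', v, ⟨hu, hu', hv⟩, hwu, huu', hu'v⟩ :=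
    exists_path_to_core hw hwω (fun hwc => hW w hwc hw) hwR
  have hvS := core_subset_confSet_surgery (W := W) (ω := ω) hv
  have hu'hub := mem_compOf_of_adjIn (core_subset_compOf_surgery_hub hv) ⟨hu'v.symm, hvS, hu'⟩
  have huhub := mem_compOf_of_adjIn hu'hub ⟨huu'.symm, hu', hu⟩
  exact mem_compOf_of_adjIn huhub ⟨hwu.symm, hu, hwS⟩

theorem notMem_of_disjoint_cornerExits
    (hWdisj : ∀ w ∈ W, Disjoint (compOf (confSet ω conf001) w) R.cornerExits) :
    ∀ v ∈ R.cornerExits, v ∉ W := fun v hv hvW =>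
  Set.disjoint_left.1 (hWdisj v hvW) mem_compOf_self hv

theorem compOf_surgery_hub_sdiff_subset (hW : W ⊆ confSet ω conf001 ∩ outerBoundary R.vertices)
    (hWdisj : ∀ w ∈ W, Disjoint (compOf (confSet ω conf001) w) R.cornerExits) :
    compOf (confSet (R.surgery W ω) conf001) R.hub \ R.vertices ⊆
      ⋃ w ∈ W, compOf (confSet ω conf001 \ R.vertices) w := by
  have hWc := notMem_of_disjoint_cornerExits hWdisj
  rw [Set.sdiff_subset_iff, ← confSet_surgery_sdiff_vertices (W := W)]
  set S := confSet (R.surgery W ω) conf001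
  have hcorner : ∀ w ∈ W, ∀ v ∈ compOf (S \ R.vertices) w, v ∉ R.cornerExits := fun w hw v hv =>
    Set.disjoint_left.1 (hWdisj w hw) (compOf_mono Set.sdiff_subset
      (confSet_surgery_sdiff_vertices (W := W) ▸ hv))
  suffices compOf S R.hub ⊆ (R.vertices \ R.tips) ∪ ⋃ w ∈ W, compOf (S \ R.vertices) w from
    this.trans (Set.union_subset_union_left _ Set.sdiff_subset)
  refine compOf_subset_of_closed (.inl ⟨core_subset_vertices hub_mem_core, hub_notMem_tips⟩)
    fun a ha b hab => ?_
  have hac : a ∉ R.cornerExits := by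
    rcases ha with ha | ha
    · exact fun hac => notMem_vertices_of_mem_cornerExits a hac ha.1
    · obtain ⟨w, hw, haw⟩ := Set.mem_iUnion₂.1 ha
      exact hcorner w hw a haw
  by_cases hbR : b ∈ R.vertices
  · exact .inl ⟨hbR, fun hbt => hac (mem_cornerExits_of_hexAdj_tip hWc hbt hab.2.1 hab.1.symm)⟩
  rcases ha with ⟨haR, hat⟩ | ha
  · have hbW := mem_of_hexAdj_of_notMem_vertices hab.2.1 haR hat hbR hab.1
    exact .inr (Set.mem_biUnion hbW mem_compOf_self)
  · obtain ⟨w, hw, haw⟩ := Set.mem_iUnion₂.1 ha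
    have hwS : w ∈ S \ R.vertices := by
      rw [confSet_surgery_sdiff_vertices]
      exact ⟨(hW hw).1, (hW hw).2.1⟩
    have haS := compOf_subset hwS haw
    exact .inr (Set.mem_biUnion hw (mem_compOf_of_adjIn haw ⟨hab.1, haS, hab.2.2, hbR⟩))

theorem hub_mem_confSet_surgery : R.hub ∈ confSet (R.surgery W ω) conf001 :=
  core_subset_confSet_surgery hub_mem_core

theorem setOf_isCompOf_surgery_hub_sdiff
    (hW : W ⊆ confSet ω conf001 ∩ outerBoundary R.vertices)
    (hWdisj : ∀ w ∈ W, Disjoint (compOf (confSet ω conf001) w) R.cornerExits) :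
    {D | IsCompOf (compOf (confSet (R.surgery W ω) conf001) R.hub \ R.vertices) D} =
      compOf (confSet ω conf001 \ R.vertices) '' W := by
  rw [← confSet_surgery_sdiff_vertices (W := W)]
  refine setOf_isCompOf_compOf_sdiff hub_mem_confSet_surgery ?_ ?_
  · have hWc := notMem_of_disjoint_cornerExits hWdisj
    exact fun w hw => ⟨subset_compOf_surgery_hub hWc hW hw, (hW hw).2.1⟩
  · rw [confSet_surgery_sdiff_vertices]
    exact compOf_surgery_hub_sdiff_subset hW hWdisj

theorem exists_isCluster_with_ends {k : ℕ∞} (hk : k ≠ 0) (hω : IsConfig ω)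
    (hcard : 12 + k ≤ {C | IsCluster ω conf001 C ∧ C.Infinite ∧
      (C ∩ R.vertices).Nonempty}.encard) :
    ∃ ω', IsConfig ω' ∧ (∀ e, ¬(end1 e ∈ R.vertices ∧ end2 e ∈ R.vertices) → ω' e = ω e) ∧
      ∃ C, IsCluster ω' conf001 C ∧ C.Infinite ∧ R.core ⊆ C ∧
        (∀ D, IsCompOf (C \ R.vertices) D → D.Infinite) ∧
        {D | IsCompOf (C \ R.vertices) D}.encard = k := by
  obtain ⟨W, hW, hWk, hWinj, hgate⟩ := exists_gates R.finite_vertices R.cornerExits.finite_toSet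
    ((add_le_add_left R.encard_cornerExits_le k).trans hcard)
  have hWc := notMem_of_disjoint_cornerExits fun w hw => (hgate w hw).2
  have hends := setOf_isCompOf_surgery_hub_sdiff hW fun w hw => (hgate w hw).2
  refine ⟨R.surgery W ω, isConfig_surgery hω hWc, fun e he => ?_, _,
    ⟨R.hub, hub_mem_confSet_surgery, rfl⟩, ?_, core_subset_compOf_surgery_hub, fun D hD => ?_, ?_⟩
  · exact (not_and_or.1 he).elim surgery_eq_of_end1_notMem surgery_eq_of_end2_notMem
  · obtain ⟨w, hw⟩ := Set.encard_ne_zero.1 (hWk ▸ hk)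
    refine (hgate w hw).1.mono ?_
    rw [← confSet_surgery_sdiff_vertices (W := W),
      ← compOf_eq_of_mem (subset_compOf_surgery_hub hWc hW hw)]
    exact compOf_mono Set.sdiff_subset
  · obtain ⟨w, hw, rfl⟩ := hends.subset hD
    exact (hgate w hw).1
  · rw [hends, (injOn_compOf_of_subset Set.sdiff_subset hWinj).encard_image, hWk]

end Surgery

section Box

/-- The box `B_{N+2}(i, j)` as a rectangle. -/
def ofBox (N : ℕ) (i j : ℤ) : LatticeRect where
  left := i - (N + 2)
  right := i + (N + 2)
  bottom := j - (N + 2)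
  top := j + (N + 2)
  width := by omega
  height := by omega

variable {N : ℕ} {i j : ℤ}

theorem vertices_ofBox : (ofBox N i j).vertices = box (N + 2) i j := by
  ext v
  simp only [vertices, ofBox, box, Set.mem_ofPred_eq, abs_le]
  push_cast
  omega

theorem box_subset_core_ofBox : box N i j ⊆ (ofBox N i j).core := by
  rintro ⟨x, y, t⟩ h
  simp only [box, Set.mem_ofPred_eq, abs_le] at h
  rw [mk_mem_core]
  simp only [ofBox]
  omega

end Box

end LatticeRect

theorem modify_to_encounter_box_general (N : ℕ) (i j : ℤ) (ω : Config) (hω : IsConfig ω)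
    (h15 : 15 ≤ {C : Set HexV |
        IsCluster ω conf001 C ∧ C.Infinite ∧ (C ∩ box (N + 2) i j).Nonempty}.encard) :
    ∃ ω' : Config, IsConfig ω' ∧
      (∀ e : HexE, ¬(end1 e ∈ box (N + 2) i j ∧ end2 e ∈ box (N + 2) i j) → ω' e = ω e) ∧
      IsEncounterBox ω' N i j := by
  rw [← LatticeRect.vertices_ofBox] at h15 ⊢
  obtain ⟨ω', hω', heq, C, hC, hCinf, hcore, hinf, hcard⟩ :=
    LatticeRect.exists_isCluster_with_ends (k := 3) (by norm_num) hω (le_trans (by norm_num) h15)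
  refine ⟨ω', hω', heq, C, hC, hCinf, LatticeRect.box_subset_core_ofBox.trans hcore, ?_, ?_⟩
  · rwa [← LatticeRect.vertices_ofBox]
  · rw [← LatticeRect.vertices_ofBox, ← hcard]
    congr 1 with D
    exact and_iff_left_of_imp (hinf D)

/-- if `ω` has at least 31 distinct infinite `{001}`-clusters meeting `B_{N+2}`,
then `ω` can be modified, changing only edges with an endpoint in `B_{N+4}`, into a 1-2 model
configuration for which `B_N` is an encounter box. -/
theorem modify_to_encounter_box
    (N : ℕ) (hN : 1 ≤ N) (ω : Config) (hω : IsConfig ω)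
    (h31 : 31 ≤ {C : Set HexV |
        IsCluster ω conf001 C ∧ C.Infinite ∧ (C ∩ box (N + 2) 0 0).Nonempty}.encard) :
    ∃ ω' : Config, IsConfig ω' ∧
      (∀ e : HexE, end1 e ∉ box (N + 4) 0 0 → end2 e ∉ box (N + 4) 0 0 → ω' e = ω e) ∧
      IsEncounterBox ω' N 0 0 := by
  obtain ⟨ω', hω', heq, hbox⟩ :=
    modify_to_encounter_box_general N 0 0 ω hω (le_trans (by norm_num) h31)
  have hsubset : box (N + 2) 0 0 ⊆ box (N + 4) 0 0 := fun v hv =>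
    ⟨hv.1.trans (by push_cast; omega), hv.2.trans (by push_cast; omega)⟩
  exact ⟨ω', hω', fun e he _ => heq e fun h => he (hsubset h.1), hbox⟩
end

section
/- Let μ be an ergodic translation-invariant Gibbs measure for the 1-2 model on the hexagonal lattice ℍ (with any weights a, b, c > 0), and let 𝒩_{001}(ω) denote the number of infinite {001}-clusters of ω. Then μ({ω : 𝒩_{001}(ω) = ∞}) = 0. -/
open MeasureTheory

/-!
The argument is that of Burton and Keane. If there are infinitely many infinite clusters, then some
large box meets eleven of them, of which at least three avoid the eight exceptional vertices next to
the corners of the box. Rewriting the configuration inside the box glues these three together in a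
connected window, at which the resulting cluster then has three infinite branches. Rewriting
finitely many edges is non-singular for a Gibbs measure, so it suffices to show that a fixed window
is almost surely no such trifurcation.

The branches at disjoint windows are compatible: two families of branches either do not meet, or all
branches at one window but one lie in a single branch at the other. Hence there are at most as many
disjoint trifurcations inside a box of side `L` as there are vertices on its outer boundary, which
is `O(L)`, whereas translation invariance makes their expected number proportional to `L ^ 2`.
-/

section Counting

variable {ι κ β : Type*}

/-- Two families of branches are compatible when they do not meet at all, or when all branches of
the first family but one lie in a single branch of the second one. -/
def BranchCompatible (D E : κ → Set β) : Prop :=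
  (∀ a b, Disjoint (D a) (E b)) ∨ ∃ a b, ∀ a' ≠ a, D a' ⊆ E b

theorem BranchCompatible.disjoint_or_subset (hκ : 3 ≤ ENat.card κ)
    {D E : κ → Set β} (h : BranchCompatible D E) (hD : Pairwise (Function.onFun Disjoint D))
    (hE : Pairwise (Function.onFun Disjoint E)) {Y : Finset β} (hY : ∀ a, ∃ y ∈ Y, y ∈ D a)
    {a x x' : κ} (hmax : ∀ b, (E b ∩ Y).ncard ≤ (D a ∩ Y).ncard) (hx : x ≠ a) (hx' : x' ≠ a)
    (b : κ) : Disjoint (D x) (E b) ∨ D x' ⊆ E b := by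
  obtain hdisj | ⟨a₀, b₀, hsub⟩ := h
  · exact .inl (hdisj x b)
  obtain rfl : a₀ = a := by
    by_contra hne
    obtain ⟨z, hza, hza₀⟩ := ENat.exists_ne_ne_of_three_le hκ a a₀
    obtain ⟨y, hyY, hyz⟩ := hY z
    have hya : y ∉ D a := Set.disjoint_left.1 (hD hza) hyz
    have hlt : (D a ∩ Y).ncard < (E b₀ ∩ Y).ncard :=
      Set.ncard_lt_ncard (Set.ssubset_iff_of_subset
        (Set.inter_subset_inter_left _ (hsub a (Ne.symm hne))) |>.2
          ⟨y, ⟨hsub z hza₀ hyz, hyY⟩, fun h => hya h.1⟩) (Y.finite_toSet.inter_of_right _)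
    exact absurd (hmax b₀) hlt.not_ge
  obtain rfl | hb := eq_or_ne b b₀
  · exact .inr (hsub x' hx')
  · exact .inl ((hE hb.symm).mono_left (hsub x hx))

theorem card_le_card_of_branchCompatible [Finite κ] (hκ : 3 ≤ ENat.card κ)
    (D : ι → κ → Set β) (I : Finset ι) (Y : Finset β)
    (hD : ∀ i ∈ I, Pairwise (Function.onFun Disjoint (D i)))
    (hY : ∀ i ∈ I, ∀ a, ∃ y ∈ Y, y ∈ D i a)
    (hcompat : (I : Set ι).Pairwise fun i j => BranchCompatible (D i) (D j)) :
    I.card ≤ Y.card := by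
  classical
  induction hn : I.card generalizing I Y with
  | zero => exact Nat.zero_le _
  | succ n ih =>
    obtain ⟨i₀, hi₀⟩ : I.Nonempty := Finset.card_pos.1 (by omega)
    obtain ⟨a₀⟩ : Nonempty κ :=
      (ENat.card_pos_iff_nonempty κ).1 (lt_of_lt_of_le (by norm_num) hκ)
    obtain ⟨⟨i, a⟩, hia, hmax⟩ := Set.exists_max_image ((I : Set ι) ×ˢ (Set.univ : Set κ))
      (fun p => (D p.1 p.2 ∩ Y).ncard) (I.finite_toSet.prod Set.finite_univ) ⟨(i₀, a₀), by simpa⟩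
    have hi : i ∈ I := hia.1
    -- Discard `i` and the points of `Y` in `D i x`: every branch at another index keeps a point of
    -- `Y`, because it is disjoint from `D i x` or contains `D i x'`.
    obtain ⟨x, hxa, -⟩ := ENat.exists_ne_ne_of_three_le hκ a a
    obtain ⟨x', hxa', hxx'⟩ := ENat.exists_ne_ne_of_three_le hκ a x
    have key (j : ι) (hj : j ∈ I.erase i) (b : κ) : Disjoint (D i x) (D j b) ∨ D i x' ⊆ D j b := by
      obtain ⟨hji, hj⟩ := Finset.mem_erase.1 hj
      exact (hcompat hi hj hji.symm).disjoint_or_subset hκ (hD i hi) (hD j hj) (hY i hi)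
        (fun b => hmax (j, b) ⟨hj, Set.mem_univ b⟩) hxa hxa' b
    have hrec : n ≤ (Y.filter (· ∉ D i x)).card := by
      refine ih (I.erase i) _ (fun j hj => hD j (Finset.mem_of_mem_erase hj)) (fun j hj b => ?_)
        (hcompat.mono fun j hj => Finset.mem_of_mem_erase hj)
        (by rw [Finset.card_erase_of_mem hi, hn, Nat.add_sub_cancel])
      obtain hdisj | hsub := key j hj b
      · obtain ⟨y, hyY, hyb⟩ := hY j (Finset.mem_of_mem_erase hj) b
        exact ⟨y, Finset.mem_filter.2 ⟨hyY, Set.disjoint_right.1 hdisj hyb⟩, hyb⟩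
      · obtain ⟨y, hyY, hyx'⟩ := hY i hi x'
        exact ⟨y, Finset.mem_filter.2 ⟨hyY, Set.disjoint_right.1 (hD i hi hxx'.symm) hyx'⟩,
          hsub hyx'⟩
    have hlt : (Y.filter (· ∉ D i x)).card < Y.card := by
      obtain ⟨y, hyY, hyx⟩ := hY i hi x
      exact Finset.card_lt_card (Finset.filter_ssubset.2 ⟨y, hyY, not_not.2 hyx⟩)
    omega

end Counting

section Branching

variable {V κ : Type*} {G : SimpleGraph V}

/-- The graph on the vertices of `G` whose edges are the edges of `G` with both ends in `S`. -/
def restrictTo (G : SimpleGraph V) (S : Set V) : SimpleGraph V where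
  Adj v w := G.Adj v w ∧ v ∈ S ∧ w ∈ S
  symm := ⟨fun _ _ h => ⟨h.1.symm, h.2.2, h.2.1⟩⟩
  loopless := ⟨fun v h => G.loopless.irrefl v h.1⟩

theorem restrictTo_adj {S : Set V} {v w : V} :
    (restrictTo G S).Adj v w ↔ G.Adj v w ∧ v ∈ S ∧ w ∈ S :=
  Iff.rfl

theorem restrictTo_mono {S T : Set V} (h : S ⊆ T) : restrictTo G S ≤ restrictTo G T :=
  fun _ _ hvw => ⟨hvw.1, h hvw.2.1, h hvw.2.2⟩

theorem restrictTo_restrictTo (S T : Set V) :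
    restrictTo (restrictTo G S) T = restrictTo G (S ∩ T) := by
  ext v w
  simp only [restrictTo_adj, Set.mem_inter_iff]
  tauto

theorem reachable_restrictTo_of_subset {S T : Set V} (h : S ⊆ T) {v w : V}
    (hvw : (restrictTo G S).Reachable v w) : (restrictTo G T).Reachable v w :=
  hvw.mono (restrictTo_mono h)

theorem reachable_restrictTo_of_adj {S : Set V} {v w : V} (h : G.Adj v w) (hv : v ∈ S)
    (hw : w ∈ S) : (restrictTo G S).Reachable v w :=
  SimpleGraph.Adj.reachable (G := restrictTo G S) ⟨h, hv, hw⟩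

theorem mem_and_reachable_of_forall_adj {H : SimpleGraph V} {P : Set V}
    (hstep : ∀ x ∈ P, ∀ y, G.Adj x y → y ∈ P ∧ H.Adj x y) {v w : V} (hv : v ∈ P)
    (h : G.Reachable v w) : w ∈ P ∧ H.Reachable v w := by
  rw [SimpleGraph.reachable_iff_reflTransGen] at h
  induction h with
  | refl => exact ⟨hv, .rfl⟩
  | tail _ hadj ih =>
    obtain ⟨hmem, hH⟩ := hstep _ ih.1 _ hadj
    exact ⟨hmem, ih.2.trans hH.reachable⟩

theorem mem_of_reachable_restrictTo {S : Set V} {v w : V} (hv : v ∈ S)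
    (h : (restrictTo G S).Reachable v w) : w ∈ S :=
  (mem_and_reachable_of_forall_adj (G := restrictTo G S) (H := ⊤)
    (fun _ _ _ hxy => ⟨hxy.2.2, hxy.ne⟩) hv h).1

theorem reachable_restrictTo_of_forall_mem {S T : Set V} {v w : V}
    (h : (restrictTo G S).Reachable v w)
    (hT : ∀ x, (restrictTo G S).Reachable v x → x ∈ T) : (restrictTo G T).Reachable v w := by
  refine (mem_and_reachable_of_forall_adj (P := {x | (restrictTo G S).Reachable v x})
    (fun x hx y hxy => ?_) .rfl h).2
  have hy : (restrictTo G S).Reachable v y := hx.trans hxy.reachable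
  exact ⟨hy, hxy.1, hT x hx, hT y hy⟩

theorem exists_adj_exit {P : Set V} {v w : V} (h : G.Reachable v w) (hv : v ∈ P) (hw : w ∉ P) :
    ∃ x ∈ P, ∃ y ∉ P, (restrictTo G P).Reachable v x ∧ G.Adj x y := by
  by_contra! hstay
  have key := mem_and_reachable_of_forall_adj (G := G) (H := G)
    (P := {x | x ∈ P ∧ (restrictTo G P).Reachable v x}) (fun x ⟨hx, hvx⟩ y hxy => ?_)
    ⟨hv, .rfl⟩ h
  · exact hw key.1.1
  · have hy : y ∈ P := by
      by_contra hy
      exact hstay x hx y hy hvx hxy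
    exact ⟨⟨hy, hvx.trans (reachable_restrictTo_of_adj hxy hx hy)⟩, hxy⟩

/-- The set `S` branches at the window `W` along the vertices `u k`: the part of `S` in the window
is connected in itself, and the `u k` are neighbours of that part lying in distinct infinite
components of `S \ W`. -/
structure IsBranching (G : SimpleGraph V) (S W : Set V) (u : κ → V) : Prop where
  window_connected : ∀ v ∈ S ∩ W, ∀ w ∈ S ∩ W, (restrictTo G (S ∩ W)).Reachable v w
  mem : ∀ k, u k ∈ S \ W
  exists_adj : ∀ k, ∃ r ∈ S ∩ W, G.Adj (u k) r
  infinite : ∀ k, {w | (restrictTo G (S \ W)).Reachable (u k) w}.Infinite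
  separated : Pairwise fun k l => ¬(restrictTo G (S \ W)).Reachable (u k) (u l)

/-- The index of the vertex `u k` in the component of `w` in `S \ W`; all components containing
none of the `u k` share one arbitrary index. -/
noncomputable def branchLabel [Nonempty κ] (G : SimpleGraph V) (S W : Set V) (u : κ → V) (w : V) :
    κ :=
  Classical.epsilon fun k => (restrictTo G (S \ W)).Reachable (u k) w

/-- The branches of `S` at the window `W`. They partition the vertices of `S \ W` which are joined
to the window in `S`. -/
def branch [Nonempty κ] (G : SimpleGraph V) (S W : Set V) (u : κ → V) (k : κ) : Set V :=
  {w ∈ S \ W | (∃ r ∈ S ∩ W, (restrictTo G S).Reachable w r) ∧ branchLabel G S W u w = k}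

theorem branchLabel_eq_of_reachable [Nonempty κ] {S W : Set V} {u : κ → V} {v w : V}
    (h : (restrictTo G (S \ W)).Reachable v w) :
    branchLabel G S W u v = branchLabel G S W u w := by
  unfold branchLabel
  congr 1
  funext k
  exact propext ⟨fun hv => hv.trans h, fun hw => hw.trans h.symm⟩

theorem pairwise_disjoint_branch [Nonempty κ] (G : SimpleGraph V) (S W : Set V) (u : κ → V) :
    Pairwise (Function.onFun Disjoint (branch G S W u)) :=
  fun _ _ hkl => Set.disjoint_left.2 fun _ hk hl => hkl (hk.2.2.symm.trans hl.2.2)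

theorem reachable_sdiff_of_avoids {S W₁ W₂ : Set V} (hW : Disjoint W₁ W₂)
    (hconn : ∀ v ∈ S ∩ W₁, ∀ w ∈ S ∩ W₁, (restrictTo G (S ∩ W₁)).Reachable v w) {w r : V}
    (hw : w ∈ S \ W₁) (havoid : ∀ y, (restrictTo G (S \ W₁)).Reachable w y → y ∉ W₂)
    (hr : r ∈ S ∩ W₁) (h : (restrictTo G S).Reachable w r) :
    (restrictTo G (S \ W₂)).Reachable w r := by
  obtain ⟨x, -, y, hy, hwx, hxy⟩ := exists_adj_exit h (P := W₁ᶜ) hw.2 (not_not.2 hr.2)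
  rw [restrictTo_restrictTo, ← Set.sdiff_eq] at hwx
  have hx : x ∈ S \ W₂ := ⟨hxy.2.1, havoid x hwx⟩
  have hsub : S ∩ W₁ ⊆ S \ W₂ := fun z hz => ⟨hz.1, Set.disjoint_left.1 hW hz.2⟩
  have hyW : y ∈ S ∩ W₁ := ⟨hxy.2.2, not_not.1 hy⟩
  have hwx' : (restrictTo G (S \ W₂)).Reachable w x :=
    reachable_restrictTo_of_forall_mem hwx fun z hz =>
      ⟨(mem_of_reachable_restrictTo hw hz).1, havoid z hz⟩
  exact hwx'.trans ((reachable_restrictTo_of_adj hxy.1 hx (hsub hyW)).trans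
    (reachable_restrictTo_of_subset hsub (hconn y hyW r hr)))

namespace IsBranching

variable {S W W₁ W₂ : Set V} {u u₁ u₂ : κ → V}

theorem branchLabel_apply [Nonempty κ] (h : IsBranching G S W u) (k : κ) :
    branchLabel G S W u (u k) = k := by
  by_contra hne
  exact h.separated hne (Classical.epsilon_spec
    (p := fun l => (restrictTo G (S \ W)).Reachable (u l) (u k)) ⟨k, .rfl⟩)

theorem mem_branch_of_reachable [Nonempty κ] (h : IsBranching G S W u) {k : κ} {w : V}
    (hw : (restrictTo G (S \ W)).Reachable (u k) w) : w ∈ branch G S W u k := by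
  obtain ⟨r, hr, hadj⟩ := h.exists_adj k
  refine ⟨mem_of_reachable_restrictTo (h.mem k) hw, ⟨r, hr, ?_⟩, ?_⟩
  · exact (reachable_restrictTo_of_subset Set.sdiff_subset hw.symm).trans
      (reachable_restrictTo_of_adj hadj (h.mem k).1 hr.1)
  · rw [← branchLabel_eq_of_reachable hw, h.branchLabel_apply]

theorem branchCompatible [Nonempty κ] (h₁ : IsBranching G S W₁ u₁) (h₂ : IsBranching G S W₂ u₂)
    (hW : Disjoint W₁ W₂) : BranchCompatible (branch G S W₁ u₁) (branch G S W₂ u₂) := by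
  by_cases hjoin : ∃ r₁ ∈ S ∩ W₁, ∃ r₂ ∈ S ∩ W₂, (restrictTo G S).Reachable r₁ r₂
  · obtain ⟨r₁, hr₁, r₂, hr₂, hr⟩ := hjoin
    refine .inr ⟨branchLabel G S W₁ u₁ r₂, branchLabel G S W₂ u₂ r₁, ?_⟩
    rintro a ha w ⟨hwS, ⟨r, hr', hwr⟩, hwa⟩
    have havoid (y : V) (hy : (restrictTo G (S \ W₁)).Reachable w y) : y ∉ W₂ := by
      intro hyW
      have hyS : y ∈ S := (mem_of_reachable_restrictTo hwS hy).1
      have hsub : S ∩ W₂ ⊆ S \ W₁ := fun z hz => ⟨hz.1, Set.disjoint_right.1 hW hz.2⟩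
      have hyr := reachable_restrictTo_of_subset hsub (h₂.window_connected y ⟨hyS, hyW⟩ r₂ hr₂)
      exact ha (hwa.symm.trans (branchLabel_eq_of_reachable (hy.trans hyr)))
    have hwr₁ : (restrictTo G S).Reachable w r₁ := hwr.trans
      (reachable_restrictTo_of_subset Set.inter_subset_left (h₁.window_connected r hr' r₁ hr₁))
    exact ⟨⟨hwS.1, havoid w .rfl⟩, ⟨r₂, hr₂, hwr₁.trans hr⟩, branchLabel_eq_of_reachable
      (reachable_sdiff_of_avoids hW h₁.window_connected hwS havoid hr₁ hwr₁)⟩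
  · refine .inl fun a b => Set.disjoint_left.2 ?_
    rintro w ⟨-, ⟨r₁, hr₁, hwr₁⟩, -⟩ ⟨-, ⟨r₂, hr₂, hwr₂⟩, -⟩
    exact hjoin ⟨r₁, hr₁, r₂, hr₂, hwr₁.symm.trans hwr₂⟩

theorem exists_reachable_boundary (h : IsBranching G S W u) {B Y : Set V} (hB : B.Finite)
    (hWB : W ⊆ B) (hY : ∀ v ∉ B, (∃ w ∈ B, G.Adj v w) → v ∈ Y) (k : κ) :
    ∃ y ∈ Y, (restrictTo G (S \ W)).Reachable (u k) y := by
  by_cases hu : u k ∈ B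
  · obtain ⟨w, hw, hwB⟩ := (h.infinite k).exists_notMem_finite hB
    obtain ⟨x, hx, y, hy, hux, hxy⟩ := exists_adj_exit hw hu hwB
    rw [restrictTo_restrictTo] at hux
    exact ⟨y, hY y hy ⟨x, hx, hxy.1.symm⟩,
      (reachable_restrictTo_of_subset Set.inter_subset_left hux).trans hxy.reachable⟩
  · obtain ⟨r, hr, hadj⟩ := h.exists_adj k
    exact ⟨u k, hY _ hu ⟨r, hWB hr.2, hadj⟩, .rfl⟩

end IsBranching

theorem card_le_card_boundary_of_isBranching {ι : Type*} [Finite κ] (hκ : 3 ≤ ENat.card κ)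
    {S : Set V} {I : Finset ι} {W : ι → Set V} {u : ι → κ → V}
    (h : ∀ i ∈ I, IsBranching G S (W i) (u i)) (hdisj : (I : Set ι).PairwiseDisjoint W)
    {B : Set V} (hB : B.Finite) (hWB : ∀ i ∈ I, W i ⊆ B) {Y : Finset V}
    (hY : ∀ v ∉ B, (∃ w ∈ B, G.Adj v w) → v ∈ Y) : I.card ≤ Y.card := by
  have : Nonempty κ := (ENat.card_pos_iff_nonempty κ).1 (lt_of_lt_of_le (by norm_num) hκ)
  refine card_le_card_of_branchCompatible hκ (fun i => branch G S (W i) (u i)) I Y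
    (fun i _ => pairwise_disjoint_branch G S (W i) (u i)) (fun i hi k => ?_)
    (fun i hi j hj hij => (h i hi).branchCompatible (h j hj) (hdisj hi hj hij))
  obtain ⟨y, hyY, hy⟩ := (h i hi).exists_reachable_boundary hB (hWB i hi) hY k
  exact ⟨y, hyY, (h i hi).mem_branch_of_reachable hy⟩

/-- The set `S` has three infinite branches at the window `W`: the Burton–Keane trifurcation, with
a set of vertices in place of a single one. -/
def HasTrifurcation (G : SimpleGraph V) (S W : Set V) : Prop :=
  ∃ u : Fin 3 → V, IsBranching G S W u

end Branching

section Symmetry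

variable {V V' κ : Type*} {G : SimpleGraph V} {G' : SimpleGraph V'}

theorem reachable_restrictTo_apply_iff (φ : G ≃g G') (S : Set V') {v w : V} :
    (restrictTo G' S).Reachable (φ v) (φ w) ↔ (restrictTo G (φ ⁻¹' S)).Reachable v w :=
  let ψ : restrictTo G (φ ⁻¹' S) ≃g restrictTo G' S :=
    ⟨φ.toEquiv, by simp [restrictTo_adj, φ.map_adj_iff]⟩
  ψ.reachable_iff

theorem IsBranching.map (φ : G ≃g G') {S W : Set V'} {u : κ → V}
    (h : IsBranching G (φ ⁻¹' S) (φ ⁻¹' W) u) : IsBranching G' S W (φ ∘ u) where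
  window_connected v hv w hw := by
    obtain ⟨v, rfl⟩ := φ.surjective v
    obtain ⟨w, rfl⟩ := φ.surjective w
    exact (reachable_restrictTo_apply_iff φ _).2 (h.window_connected v hv w hw)
  mem k := h.mem k
  exists_adj k := by
    obtain ⟨r, hr, hadj⟩ := h.exists_adj k
    exact ⟨φ r, hr, φ.map_adj_iff.2 hadj⟩
  infinite k := by
    refine ((h.infinite k).image φ.injective.injOn).mono ?_
    rintro _ ⟨w, hw, rfl⟩
    exact (reachable_restrictTo_apply_iff φ _).2 hw
  separated k l hkl := fun hreach =>
    h.separated hkl ((reachable_restrictTo_apply_iff φ _).1 hreach)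

theorem HasTrifurcation.map (φ : G ≃g G') {S W : Set V'}
    (h : HasTrifurcation G (φ ⁻¹' S) (φ ⁻¹' W)) : HasTrifurcation G' S W :=
  h.elim fun _ hu => ⟨_, hu.map φ⟩

end Symmetry

section Measurability

variable {Ω V : Type*} [MeasurableSpace Ω] [Countable V]

theorem measurable_reachable {H : Ω → SimpleGraph V} (hH : ∀ v w, Measurable fun ω => (H ω).Adj v w)
    (v w : V) : Measurable fun ω => (H ω).Reachable v w := by
  have hwalk (n : ℕ) (v : V) : Measurable fun ω => ∃ p : (H ω).Walk v w, p.length = n := by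
    induction n generalizing v with
    | zero => simp only [SimpleGraph.Walk.exists_length_eq_zero_iff, measurable_const]
    | succ n ih =>
      have hsucc (ω : Ω) : (∃ p : (H ω).Walk v w, p.length = n + 1) ↔
          ∃ x, (H ω).Adj v x ∧ ∃ p : (H ω).Walk x w, p.length = n := by
        constructor
        · rintro ⟨_ | ⟨hadj, p⟩, hp⟩
          · cases hp
          · exact ⟨_, hadj, p, Nat.succ.inj hp⟩
        · rintro ⟨x, hadj, p, rfl⟩
          exact ⟨.cons hadj p, rfl⟩
      simp only [hsucc]
      exact .exists fun x => (hH v x).and (ih x)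
  have hreach (ω : Ω) : (H ω).Reachable v w ↔ ∃ n, ∃ p : (H ω).Walk v w, p.length = n :=
    ⟨fun ⟨p⟩ => ⟨_, p, rfl⟩, fun ⟨_, p, _⟩ => ⟨p⟩⟩
  simp only [hreach]
  exact .exists fun n => hwalk n v

theorem measurable_infinite {A : Ω → Set V} (hA : ∀ v, Measurable fun ω => v ∈ A ω) :
    Measurable fun ω => (A ω).Infinite := by
  have hiff (ω : Ω) : (A ω).Infinite ↔ ∀ F : Finset V, ∃ v, v ∉ F ∧ v ∈ A ω :=
    ⟨fun h F => (h.exists_notMem_finset F).imp fun _ hv => hv.symm, fun h hfin =>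
      (h hfin.toFinset).elim fun v hv => hv.1 (hfin.mem_toFinset.2 hv.2)⟩
  simp only [hiff]
  exact .forall fun F => .exists fun v => measurable_const.and (hA v)

theorem measurable_hasTrifurcation (G : SimpleGraph V) {S : Ω → Set V}
    (hS : ∀ v, Measurable fun ω => v ∈ S ω) (W : Set V) :
    Measurable fun ω => HasTrifurcation G (S ω) W := by
  have hreach {T : Ω → Set V} (hT : ∀ v, Measurable fun ω => v ∈ T ω) (v w : V) :
      Measurable fun ω => (restrictTo G (T ω)).Reachable v w :=
    measurable_reachable (fun v w => measurable_const.and ((hT v).and (hT w))) v w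
  have hin (v : V) : Measurable fun ω => v ∈ S ω ∩ W := (hS v).and measurable_const
  have hout (v : V) : Measurable fun ω => v ∈ S ω \ W := (hS v).and measurable_const
  have hiff (ω : Ω) : HasTrifurcation G (S ω) W ↔ ∃ u : Fin 3 → V,
      (∀ v, v ∈ S ω ∩ W → ∀ w, w ∈ S ω ∩ W → (restrictTo G (S ω ∩ W)).Reachable v w) ∧
      (∀ k, u k ∈ S ω \ W ∧ (∃ r, r ∈ S ω ∩ W ∧ G.Adj (u k) r) ∧
        {w | (restrictTo G (S ω \ W)).Reachable (u k) w}.Infinite) ∧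
      ∀ k l, k ≠ l → ¬(restrictTo G (S ω \ W)).Reachable (u k) (u l) :=
    exists_congr fun u => ⟨fun h => ⟨h.window_connected, fun k => ⟨h.mem k, h.exists_adj k,
      h.infinite k⟩, h.separated⟩, fun ⟨hW, hu, hsep⟩ => ⟨hW, fun k => (hu k).1,
      fun k => (hu k).2.1, fun k => (hu k).2.2, hsep⟩⟩
  simp only [hiff]
  refine .exists fun u => .and ?_ (.and ?_ ?_)
  · exact .forall fun v => (hin v).imp (.forall fun w => (hin w).imp (hreach hin v w))
  · exact .forall fun k => (hout _).and (.and (.exists fun r => (hin r).and measurable_const)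
      (measurable_infinite fun w => hreach hout _ w))
  · exact .forall fun k => .forall fun l => measurable_const.imp (hreach hout _ _).not

end Measurability

theorem sum_measure_le_of_card_filter_le {α ι : Type*} [MeasurableSpace α] (μ : Measure α)
    {s : Finset ι} {A : ι → Set α} (hA : ∀ i ∈ s, MeasurableSet (A i)) {N : ℕ}
    (hN : ∀ x, ∀ t ⊆ s, (∀ i ∈ t, x ∈ A i) → t.card ≤ N) :
    ∑ i ∈ s, μ (A i) ≤ N * μ Set.univ := by
  classical
  calc ∑ i ∈ s, μ (A i) = ∑ i ∈ s, ∫⁻ x, (A i).indicator 1 x ∂μ :=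
        Finset.sum_congr rfl fun i hi => (lintegral_indicator_one (hA i hi)).symm
    _ = ∫⁻ x, ∑ i ∈ s, (A i).indicator 1 x ∂μ :=
        (lintegral_finsetSum s fun i hi => measurable_one.indicator (hA i hi)).symm
    _ ≤ ∫⁻ _, N ∂μ := lintegral_mono fun x => by
        simp only [Set.indicator_apply, Pi.one_apply, Finset.sum_boole]
        exact_mod_cast hN x _ (Finset.filter_subset _ _) fun i hi => (Finset.mem_filter.1 hi).2
    _ = N * μ Set.univ := lintegral_const _

section Lattice

theorem hexAdj_iff {v w : HexV} : HexAdj v w ↔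
    (v.2.2 = true ∧ w.2.2 = false ∧ ((w.1 = v.1 ∧ w.2.1 = v.2.1) ∨
      (w.1 = v.1 + 1 ∧ w.2.1 = v.2.1) ∨ (w.1 = v.1 ∧ w.2.1 = v.2.1 + 1))) ∨
    (w.2.2 = true ∧ v.2.2 = false ∧ ((v.1 = w.1 ∧ v.2.1 = w.2.1) ∨
      (v.1 = w.1 + 1 ∧ v.2.1 = w.2.1) ∨ (v.1 = w.1 ∧ v.2.1 = w.2.1 + 1))) := by
  obtain ⟨x, y, s⟩ := v
  obtain ⟨x', y', t⟩ := w
  constructor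
  · rintro ⟨hne, ⟨p, q, k⟩, hv, hw⟩
    fin_cases k <;> cases s <;> cases t <;> simp_all [end1, end2]
  · simp only
    rintro (⟨rfl, rfl, h⟩ | ⟨rfl, rfl, h⟩) <;> obtain ⟨rfl, rfl⟩ | ⟨rfl, rfl⟩ | ⟨rfl, rfl⟩ := h
    · exact ⟨by simp, (_, _, 0), .inl rfl, .inr rfl⟩
    · exact ⟨by simp, (_, _, 1), .inl rfl, .inr rfl⟩
    · exact ⟨by simp, (_, _, 2), .inl rfl, .inr rfl⟩
    · exact ⟨by simp, (_, _, 0), .inr rfl, .inl rfl⟩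
    · exact ⟨by simp, (_, _, 1), .inr rfl, .inl rfl⟩
    · exact ⟨by simp, (_, _, 2), .inr rfl, .inl rfl⟩

/-- The hexagonal lattice as a simple graph. -/
def hexGraph : SimpleGraph HexV where
  Adj := HexAdj
  symm := ⟨fun _ _ ⟨hne, e, hv, hw⟩ => ⟨hne.symm, e, hw, hv⟩⟩
  loopless := ⟨fun _ h => h.1 rfl⟩

theorem hexGraph_adj_true_false {x y x' y' : ℤ} : hexGraph.Adj (x, y, true) (x', y', false) ↔
    (x' = x ∧ y' = y) ∨ (x' = x + 1 ∧ y' = y) ∨ (x' = x ∧ y' = y + 1) := by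
  simp [hexGraph, hexAdj_iff]

theorem hexGraph_adj_false_true {x y x' y' : ℤ} : hexGraph.Adj (x, y, false) (x', y', true) ↔
    (x = x' ∧ y = y') ∨ (x = x' + 1 ∧ y = y') ∨ (x = x' ∧ y = y' + 1) := by
  rw [hexGraph.adj_comm, hexGraph_adj_true_false]

theorem not_hexGraph_adj_same {x y x' y' : ℤ} {t : Bool} :
    ¬hexGraph.Adj (x, y, t) (x', y', t) := by
  cases t <;> simp [hexGraph, hexAdj_iff]

/-- Translation by `g ∈ ℤ²` as an automorphism of the hexagonal lattice. -/
def hexShift (g : ℤ × ℤ) : hexGraph ≃g hexGraph where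
  toEquiv := (Equiv.addRight g.1).prodCongr ((Equiv.addRight g.2).prodCongr (Equiv.refl Bool))
  map_rel_iff' {v w} := by
    change HexAdj (v.1 + g.1, v.2.1 + g.2, v.2.2) (w.1 + g.1, w.2.1 + g.2, w.2.2) ↔ HexAdj v w
    simp only [hexAdj_iff, add_right_comm _ _ (1 : ℤ), add_left_inj]

theorem hexShift_apply (g : ℤ × ℤ) (v : HexV) :
    hexShift g v = (v.1 + g.1, v.2.1 + g.2, v.2.2) :=
  rfl

theorem confSet_shiftConfig (g : ℤ × ℤ) (ω : Config) (τ : Fin 3 → Bool) :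
    confSet (shiftConfig g ω) τ = hexShift g ⁻¹' confSet ω τ := by
  ext ⟨x, y, t⟩
  have hloc : localConf (shiftConfig g ω) (x, y, t) = localConf ω (hexShift g (x, y, t)) := by
    funext i
    cases t <;> fin_cases i <;>
      simp [localConf, shiftConfig, edgesAt, hexShift_apply, shiftE, sub_add_eq_add_sub]
  simp only [confSet, Set.mem_ofPred_eq, Set.mem_preimage, hloc]

theorem mem_box_zero {n : ℕ} {v : HexV} :
    v ∈ box n 0 0 ↔ (-(n : ℤ) ≤ v.1 ∧ v.1 ≤ n) ∧ -(n : ℤ) ≤ v.2.1 ∧ v.2.1 ≤ n := by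
  simp only [box, sub_zero, Set.mem_ofPred_eq, abs_le]

/-- The box `B_n(0,0)` as a finset. -/
noncomputable def boxFinset (n : ℕ) : Finset HexV :=
  Finset.Icc (-n : ℤ) n ×ˢ Finset.Icc (-n : ℤ) n ×ˢ Finset.univ

theorem coe_boxFinset (n : ℕ) : (boxFinset n : Set HexV) = box n 0 0 := by
  ext v
  simp [boxFinset, mem_box_zero]

theorem finite_box_zero (n : ℕ) : (box n 0 0).Finite :=
  coe_boxFinset n ▸ (boxFinset n).finite_toSet

theorem card_boxFinset_succ_sdiff (n : ℕ) :
    (boxFinset (n + 1) \ boxFinset n).card = 8 * (2 * n + 2) := by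
  have hcard (n : ℕ) : (boxFinset n).card = 2 * (2 * n + 1) ^ 2 := by
    have hside : ((n : ℤ) + 1 + n).toNat = 2 * n + 1 := by omega
    simp only [boxFinset, Finset.card_product, Int.card_Icc, sub_neg_eq_add, hside,
      Finset.card_univ, Fintype.card_bool]
    ring
  have hsub : boxFinset n ⊆ boxFinset (n + 1) := by
    rw [← Finset.coe_subset, coe_boxFinset, coe_boxFinset]
    intro v
    simp only [mem_box_zero]
    omega
  rw [Finset.card_sdiff_of_subset hsub, hcard, hcard, Nat.sub_eq_iff_eq_add (by gcongr; omega)]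
  ring

theorem mem_boxFinset_sdiff_of_adj {n : ℕ} {v : HexV} (hv : v ∉ box n 0 0)
    (hadj : ∃ w ∈ box n 0 0, hexGraph.Adj v w) : v ∈ boxFinset (n + 1) \ boxFinset n := by
  obtain ⟨w, hw, hvw⟩ := hadj
  rw [← Finset.mem_coe, Finset.coe_sdiff, coe_boxFinset, coe_boxFinset]
  refine ⟨?_, hv⟩
  rw [mem_box_zero] at hw ⊢
  have := hexAdj_iff.1 hvw
  push_cast
  omega

end Lattice

section Stationarity

theorem pairwiseDisjoint_hexShift_image {m : ℕ} {W : Set HexV} (hW : W ⊆ box m 0 0) :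
    Pairwise fun p q : ℤ × ℤ =>
      Disjoint (hexShift ((2 * m + 1 : ℤ) • p) '' W) (hexShift ((2 * m + 1 : ℤ) • q) '' W) := by
  have key {x y p q : ℤ} (hx : -m ≤ x ∧ x ≤ m) (hy : -m ≤ y ∧ y ≤ m)
      (h : y + (2 * m + 1) * q = x + (2 * m + 1) * p) : p = q := by
    have hdvd : (2 * m + 1 : ℤ) ∣ y - x := ⟨p - q, by linarith⟩
    have hyx := Int.eq_zero_of_abs_lt_dvd hdvd (abs_lt.2 (by omega))
    have hzero : (2 * m + 1 : ℤ) * (p - q) = 0 := by linarith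
    have := (mul_eq_zero.1 hzero).resolve_left (by omega)
    omega
  intro p q hpq
  refine Set.disjoint_left.2 ?_
  rintro _ ⟨v, hv, rfl⟩ ⟨w, hw, hwv⟩
  have hv := mem_box_zero.1 (hW hv)
  have hw := mem_box_zero.1 (hW hw)
  simp only [hexShift_apply, Prod.smul_fst, Prod.smul_snd, smul_eq_mul, Prod.mk.injEq] at hwv
  exact hpq (Prod.ext (key hv.1 hw.1 hwv.1) (key hv.2 hw.2 hwv.2.1))

theorem hexShift_image_subset_box {m L : ℕ} {W : Set HexV} (hW : W ⊆ box m 0 0) {p : ℤ × ℤ}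
    (hp : |p.1| ≤ (L : ℤ) ∧ |p.2| ≤ (L : ℤ)) :
    hexShift ((2 * m + 1 : ℤ) • p) '' W ⊆ box (m + (2 * m + 1) * L) 0 0 := by
  have key {x p : ℤ} (hx : -m ≤ x ∧ x ≤ m) (hp : |p| ≤ L) :
      |x + (2 * m + 1) * p| ≤ ((m + (2 * m + 1) * L : ℕ) : ℤ) := by
    calc |x + (2 * m + 1) * p| ≤ |x| + |(2 * m + 1) * p| := abs_add_le _ _
      _ = |x| + (2 * m + 1) * |p| := by
        rw [abs_mul, abs_of_nonneg (show (0 : ℤ) ≤ 2 * m + 1 by omega)]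
      _ ≤ m + (2 * m + 1) * L := by gcongr; exact abs_le.2 hx
      _ = _ := by push_cast; rfl
  rintro _ ⟨v, hv, rfl⟩
  have hv := mem_box_zero.1 (hW hv)
  exact mem_box_zero.2 ⟨abs_le.1 (key hv.1 hp.1), abs_le.1 (key hv.2 hp.2)⟩

theorem card_trifurcation_translates_le {S W : Set HexV} {m L : ℕ} (hW : W ⊆ box m 0 0)
    {I : Finset (ℤ × ℤ)} (hI : ∀ p ∈ I, |p.1| ≤ (L : ℤ) ∧ |p.2| ≤ (L : ℤ))
    (h : ∀ p ∈ I, HasTrifurcation hexGraph S (hexShift ((2 * m + 1 : ℤ) • p) '' W)) :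
    I.card ≤ 16 * (2 * m + 1) * (2 * L + 1) := by
  choose! u hu using h
  calc I.card ≤ (boxFinset (m + (2 * m + 1) * L + 1) \ boxFinset (m + (2 * m + 1) * L)).card :=
        card_le_card_boundary_of_isBranching (by simp) hu
          ((pairwiseDisjoint_hexShift_image hW).set_pairwise _) (finite_box_zero _)
          (fun p hp => hexShift_image_subset_box hW (hI p hp)) fun _ => mem_boxFinset_sdiff_of_adj
    _ = 8 * (2 * (m + (2 * m + 1) * L) + 2) := card_boxFinset_succ_sdiff _
    _ = 8 * (2 * m + 1) * (2 * L + 1) + 8 := by ring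
    _ ≤ 16 * (2 * m + 1) * (2 * L + 1) := by
      have : 1 ≤ (2 * m + 1) * (2 * L + 1) := Nat.one_le_iff_ne_zero.2 (by positivity)
      linarith

theorem measurable_shiftConfig (g : ℤ × ℤ) : Measurable (shiftConfig g) :=
  measurable_pi_lambda _ fun _ => measurable_pi_apply _

theorem measurable_mem_confSet (τ : Fin 3 → Bool) (v : HexV) :
    Measurable fun ω => v ∈ confSet ω τ := by
  simp only [confSet, Set.mem_ofPred_eq, funext_iff]
  exact .forall fun i => measurableSet_setOfPred.1
    (measurableSet_eq_fun (measurable_pi_apply _) measurable_const)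

theorem measurableSet_hasTrifurcation_confSet (τ : Fin 3 → Bool) (W : Set HexV) :
    MeasurableSet {ω | HasTrifurcation hexGraph (confSet ω τ) W} :=
  measurableSet_setOfPred.2 (measurable_hasTrifurcation hexGraph (measurable_mem_confSet τ) W)

theorem sq_mul_measure_hasTrifurcation_le {μ : Measure Config} (hμ : TransInvariant μ)
    (τ : Fin 3 → Bool) {W : Set HexV} {m : ℕ} (hW : W ⊆ box m 0 0) (L : ℕ) :
    (2 * L + 1 : ℕ) ^ 2 * μ {ω | HasTrifurcation hexGraph (confSet ω τ) W} ≤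
      (16 * (2 * m + 1) * (2 * L + 1) : ℕ) * μ Set.univ := by
  set T := {ω | HasTrifurcation hexGraph (confSet ω τ) W}
  have hT : MeasurableSet T := measurableSet_hasTrifurcation_confSet τ W
  let g (p : ℤ × ℤ) : ℤ × ℤ := (2 * m + 1 : ℤ) • p
  let I : Finset (ℤ × ℤ) := Finset.Icc (-L : ℤ) L ×ˢ Finset.Icc (-L : ℤ) L
  have hstat (p : ℤ × ℤ) : μ (shiftConfig (g p) ⁻¹' T) = μ T := by
    rw [← Measure.map_apply (measurable_shiftConfig _) hT, hμ]
  have hcard : I.card = (2 * L + 1) ^ 2 := by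
    have hside : ((L : ℤ) + 1 + L).toNat = 2 * L + 1 := by omega
    simp only [I, Finset.card_product, Int.card_Icc, sub_neg_eq_add, hside, sq]
  calc ((2 * L + 1 : ℕ) : ENNReal) ^ 2 * μ T = ∑ p ∈ I, μ (shiftConfig (g p) ⁻¹' T) := by
        simp only [hstat, Finset.sum_const, hcard, nsmul_eq_mul, Nat.cast_pow]
    _ ≤ _ := by
        refine sum_measure_le_of_card_filter_le μ (fun p _ => measurable_shiftConfig _ hT)
          fun ω J hJ hω => card_trifurcation_translates_le (S := confSet ω τ) hW (fun p hp => ?_)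
            fun p hp => .map (hexShift (g p)) ?_
        · simpa [I, abs_le] using hJ hp
        · rw [Set.preimage_image_eq W (hexShift (g p)).injective, ← confSet_shiftConfig]
          exact hω p hp

theorem measure_hasTrifurcation_eq_zero {μ : Measure Config} [IsFiniteMeasure μ]
    (hμ : TransInvariant μ) (τ : Fin 3 → Bool) {W : Set HexV} {m : ℕ} (hW : W ⊆ box m 0 0) :
    μ {ω | HasTrifurcation hexGraph (confSet ω τ) W} = 0 := by
  by_contra hpos
  obtain ⟨L, hL⟩ := ENNReal.exists_nat_mul_gt hpos
    (ENNReal.mul_ne_top (ENNReal.natCast_ne_top (16 * (2 * m + 1))) (measure_ne_top μ Set.univ))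
  have hle := sq_mul_measure_hasTrifurcation_le hμ τ hW L
  rw [sq, mul_assoc, mul_comm (16 * (2 * m + 1)), Nat.cast_mul (2 * L + 1), mul_assoc,
    ENNReal.mul_le_mul_iff_right (by simp) (ENNReal.natCast_ne_top _)] at hle
  refine (hL.trans_le ?_).not_ge hle
  gcongr
  omega

end Stationarity

section Cylinders

theorem cyl_coe (J : Finset HexE) (σ : Config) :
    cyl J σ = (J.restrict : Config → J → Bool) ⁻¹' {J.restrict σ} := by
  ext ω
  exact ⟨fun h => funext fun e => h e.1 e.2, fun h e he => congrFun h ⟨e, he⟩⟩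

theorem measurableSet_cyl (J : Finset HexE) (σ : Config) : MeasurableSet (cyl J σ) :=
  cyl_coe J σ ▸ Finset.measurable_restrict J (measurableSet_singleton _)

theorem isOpen_cyl (J : Finset HexE) (σ : Config) : IsOpen (cyl J σ) :=
  cyl_coe J σ ▸ (isOpen_discrete _).preimage (Finset.continuous_restrict J)

theorem measure_ext_of_cyl {μ ν : Measure Config} [IsFiniteMeasure μ] {P : Set Config}
    (hμ : μ Pᶜ = 0) (hν : ν Pᶜ = 0)
    (h : ∀ I : Finset HexE, ∃ J, I ⊆ J ∧ ∀ ρ ∈ P, μ (cyl J ρ) = ν (cyl J ρ)) : μ = ν := by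
  refine IsProjectiveLimit.unique (P := fun I => μ.map I.restrict) (fun _ => rfl) fun I => ?_
  obtain ⟨J, hIJ, hJ⟩ := h I
  suffices hmap : ν.map J.restrict = μ.map J.restrict by
    have hmeas : Measurable (Finset.restrict₂ (π := fun _ : HexE => Bool) hIJ) := by fun_prop
    beta_reduce
    rw [← Finset.restrict₂_comp_restrict hIJ, ← Measure.map_map hmeas (by fun_prop), hmap,
      Measure.map_map hmeas (by fun_prop)]
  refine Measure.ext_of_singleton fun p => ?_
  rw [Measure.map_apply (by fun_prop) (measurableSet_singleton p),
    Measure.map_apply (by fun_prop) (measurableSet_singleton p)]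
  by_cases hp : ∃ ρ ∈ P, J.restrict ρ = p
  · obtain ⟨ρ, hρ, rfl⟩ := hp
    rw [← cyl_coe, hJ ρ hρ]
  · have hsub : (J.restrict : Config → J → Bool) ⁻¹' {p} ⊆ Pᶜ := fun ρ hρp hρ => hp ⟨ρ, hρ, hρp⟩
    rw [measure_mono_null hsub hμ, measure_mono_null hsub hν]

end Cylinders

section Neighborhoods

theorem eq_end_edgesAt (v : HexV) (i : Fin 3) :
    v = end1 (edgesAt v i) ∨ v = end2 (edgesAt v i) := by
  obtain ⟨x, y, t⟩ := v
  cases t <;> fin_cases i <;> simp [end1, end2, edgesAt]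

theorem edgesAt_end1 (e : HexE) : edgesAt (end1 e) e.2.2 = e := by
  simp [end1, edgesAt]

theorem edgesAt_end2 (e : HexE) : edgesAt (end2 e) e.2.2 = e := by
  obtain ⟨x, y, k⟩ := e
  fin_cases k <;> simp [end2, edgesAt]

theorem mem_verts_iff {F : Finset HexE} {v : HexV} : v ∈ verts F ↔ ∃ i, edgesAt v i ∈ F := by
  simp only [verts, endsFinset, Finset.mem_biUnion, Finset.mem_insert, Finset.mem_singleton]
  constructor
  · rintro ⟨e, he, rfl | rfl⟩
    exacts [⟨_, (edgesAt_end1 e).symm ▸ he⟩, ⟨_, (edgesAt_end2 e).symm ▸ he⟩]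
  · rintro ⟨i, hi⟩
    exact ⟨_, hi, eq_end_edgesAt v i⟩

theorem verts_mono {F H : Finset HexE} (h : F ⊆ H) : verts F ⊆ verts H :=
  Finset.biUnion_subset_biUnion_of_subset_left _ h

/-- All edges incident to a vertex of `verts F`: the set `F ∪ ∂F` as a finset. -/
def closedNbhd (F : Finset HexE) : Finset HexE :=
  (verts F).biUnion fun v => Finset.univ.image (edgesAt v)

theorem mem_closedNbhd {F : Finset HexE} {e : HexE} :
    e ∈ closedNbhd F ↔ ∃ v ∈ verts F, ∃ i, edgesAt v i = e := by
  simp only [closedNbhd, Finset.mem_biUnion, Finset.mem_image, Finset.mem_univ, true_and]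

theorem subset_closedNbhd (F : Finset HexE) : F ⊆ closedNbhd F := fun e he =>
  mem_closedNbhd.2 ⟨end1 e, mem_verts_iff.2 ⟨_, (edgesAt_end1 e).symm ▸ he⟩, _, edgesAt_end1 e⟩

theorem closedNbhd_mono {F H : Finset HexE} (h : F ⊆ H) : closedNbhd F ⊆ closedNbhd H :=
  Finset.biUnion_subset_biUnion_of_subset_left _ (verts_mono h)

theorem coe_closedNbhd (F : Finset HexE) :
    (closedNbhd F : Set HexE) = ↑F ∪ edgeNbhd F := by
  ext e
  constructor
  · intro he
    obtain ⟨v, hv, i, rfl⟩ := mem_closedNbhd.1 he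
    obtain ⟨f, hf, hvf⟩ := Finset.mem_biUnion.1 hv
    simp only [endsFinset, Finset.mem_insert, Finset.mem_singleton] at hvf
    refine .inr ⟨f, hf, ?_⟩
    rcases hvf with h | h <;> rw [← h] <;> have := eq_end_edgesAt v i <;> tauto
  · rintro (he | ⟨f, hf, h⟩)
    · exact subset_closedNbhd F he
    · have hends : end1 f ∈ verts F ∧ end2 f ∈ verts F := by
        constructor <;> exact Finset.mem_biUnion.2 ⟨f, hf, by simp [endsFinset]⟩
      refine mem_closedNbhd.2 ?_
      rcases h with h | h | h | h <;> rw [h] at hends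
      exacts [⟨_, hends.1, _, edgesAt_end1 e⟩, ⟨_, hends.1, _, edgesAt_end2 e⟩,
        ⟨_, hends.2, _, edgesAt_end1 e⟩, ⟨_, hends.2, _, edgesAt_end2 e⟩]

theorem localConf_eq_of_mem_cyl {F : Finset HexE} {ω σ : Config} (h : ω ∈ cyl (closedNbhd F) σ)
    {v : HexV} (hv : v ∈ verts F) : localConf ω v = localConf σ v :=
  funext fun i => h _ (mem_closedNbhd.2 ⟨v, hv, i, rfl⟩)

theorem localConf_eq_of_notMem_verts {F : Finset HexE} {ω σ : Config} (h : ∀ e ∉ F, ω e = σ e)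
    {v : HexV} (hv : v ∉ verts F) : localConf ω v = localConf σ v :=
  funext fun i => h _ fun hi => hv (mem_verts_iff.2 ⟨i, hi⟩)

theorem isConfig_of_eqOn {F : Finset HexE} {ω σ τ : Config} (hσ : IsConfig σ) (hτ : IsConfig τ)
    (hωσ : ∀ e ∉ F, ω e = σ e) (hωτ : ω ∈ cyl (closedNbhd F) τ) : IsConfig ω := by
  intro v
  by_cases hv : v ∈ verts F
  · exact localConf_eq_of_mem_cyl hωτ hv ▸ hτ v
  · exact localConf_eq_of_notMem_verts hωσ hv ▸ hσ v

end Neighborhoods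

section Gibbs

theorem measurableSet_isConfig : MeasurableSet {ω | IsConfig ω} := by
  have h : {ω | IsConfig ω} = ⋂ v, (localConf · v) ⁻¹'
      {f | 1 ≤ (Finset.univ.filter fun i => f i = true).card ∧
        (Finset.univ.filter fun i => f i = true).card ≤ 2} := by
    ext ω
    simp only [IsConfig, Set.mem_ofPred_eq, Set.mem_iInter, Set.mem_preimage]
  rw [h]
  exact .iInter fun v =>
    (measurable_pi_lambda (localConf · v) fun i => measurable_pi_apply _)
      (Set.toFinite _).measurableSet

theorem weight_pos {a b c : ℝ} (ha : 0 < a) (hb : 0 < b) (hc : 0 < c) {ω : Config}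
    (hω : IsConfig ω) (v : HexV) : 0 < weight a b c (localConf ω v) := by
  have hcard := hω v
  generalize localConf ω v = f at hcard
  simp only [Finset.card_filter, Fin.sum_univ_three] at hcard
  unfold weight
  cases h₀ : f 0 <;> cases h₁ : f 1 <;> cases h₂ : f 2 <;> simp_all

/-- The product of the weights of `ω` over the vertices incident to `F`. -/
noncomputable def localWeight (a b c : ℝ) (F : Finset HexE) (ω : Config) : ENNReal :=
  ∏ v ∈ verts F, ENNReal.ofReal (weight a b c (localConf ω v))

theorem localWeight_congr {a b c : ℝ} {F : Finset HexE} {ω σ : Config}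
    (h : ω ∈ cyl (closedNbhd F) σ) : localWeight a b c F ω = localWeight a b c F σ :=
  Finset.prod_congr rfl fun _ hv => by rw [localConf_eq_of_mem_cyl h hv]

theorem localWeight_ne_top (a b c : ℝ) (F : Finset HexE) (ω : Config) :
    localWeight a b c F ω ≠ ⊤ :=
  ENNReal.prod_ne_top fun _ _ => ENNReal.ofReal_ne_top

theorem localWeight_ne_zero {a b c : ℝ} (ha : 0 < a) (hb : 0 < b) (hc : 0 < c) (F : Finset HexE)
    {ω : Config} (hω : IsConfig ω) : localWeight a b c F ω ≠ 0 :=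
  Finset.prod_ne_zero_iff.2 fun v _ => (ENNReal.ofReal_pos.2 (weight_pos ha hb hc hω v)).ne'

namespace IsGibbs

variable {a b c : ℝ} {μ : Measure Config}

theorem measure_isConfig_compl (hμ : IsGibbs a b c μ) : μ {ω | IsConfig ω}ᶜ = 0 :=
  have := hμ.1
  (prob_compl_eq_zero_iff measurableSet_isConfig).2 hμ.2.1

theorem measure_cyl_mul_localWeight (ha : 0 < a) (hb : 0 < b) (hc : 0 < c) (hμ : IsGibbs a b c μ)
    {F H : Finset HexE} (hFH : F ⊆ H) {σ τ : Config} (hσ : IsConfig σ) (hτ : IsConfig τ)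
    (hστ : ∀ e ∉ F, σ e = τ e) :
    μ (cyl (closedNbhd H) σ) * localWeight a b c F τ =
      μ (cyl (closedNbhd H) τ) * localWeight a b c F σ := by
  have hgibbs := hμ.2.2 H σ τ hσ hτ fun e he => hστ e fun heF => he (hFH heF)
  let r (ρ : Config) := ∏ v ∈ verts H \ verts F, ENNReal.ofReal (weight a b c (localConf ρ v))
  have hsplit (ρ : Config) (hρ : IsConfig ρ) :
      ENNReal.ofReal (∏ v ∈ verts H, weight a b c (localConf ρ v)) =
        r ρ * localWeight a b c F ρ := by
    rw [ENNReal.ofReal_prod_of_nonneg fun v _ => (weight_pos ha hb hc hρ v).le]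
    exact (Finset.prod_sdiff (verts_mono hFH)).symm
  have hr : r τ = r σ := Finset.prod_congr rfl fun v hv => by
    rw [localConf_eq_of_notMem_verts hστ (Finset.mem_sdiff.1 hv).2]
  have hr₀ : r σ ≠ 0 :=
    Finset.prod_ne_zero_iff.2 fun v _ => (ENNReal.ofReal_pos.2 (weight_pos ha hb hc hσ v)).ne'
  have hr_top : r σ ≠ ⊤ := ENNReal.prod_ne_top fun _ _ => ENNReal.ofReal_ne_top
  rw [← coe_closedNbhd, hsplit σ hσ, hsplit τ hτ, hr] at hgibbs
  refine (ENNReal.mul_right_inj hr₀ hr_top).1 ?_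
  rw [mul_left_comm, hgibbs, mul_left_comm]

end IsGibbs

theorem measurable_piecewise_config (F : Finset HexE) (φ : Config) :
    Measurable fun ω : Config => F.piecewise φ ω := by
  refine measurable_pi_lambda _ fun e => ?_
  by_cases he : e ∈ F
  · simp only [Finset.piecewise_eq_of_mem _ _ _ he, measurable_const]
  · simp only [Finset.piecewise_eq_of_notMem _ _ _ he, measurable_pi_apply]

theorem piecewise_mem_cyl_closedNbhd {F : Finset HexE} {ω σ τ : Config}
    (hστ : ∀ e ∉ F, σ e = τ e) (hω : ω ∈ cyl (closedNbhd F) σ) :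
    F.piecewise τ ω ∈ cyl (closedNbhd F) τ := by
  intro e he
  by_cases heF : e ∈ F
  · exact F.piecewise_eq_of_mem _ _ heF
  · rw [F.piecewise_eq_of_notMem _ _ heF, hω e he, hστ e heF]

theorem preimage_piecewise_cyl_inter {F J : Finset HexE} (hJ : closedNbhd F ⊆ J) {ρ σ τ : Config}
    (hστ : ∀ e ∉ F, σ e = τ e) (hρ : ρ ∈ cyl (closedNbhd F) τ) :
    (fun ω => F.piecewise τ ω) ⁻¹' cyl J ρ ∩ cyl (closedNbhd F) σ = cyl J (F.piecewise σ ρ) := by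
  have hF := subset_closedNbhd F
  have hρσ := piecewise_mem_cyl_closedNbhd (fun e he => (hστ e he).symm) hρ
  ext ω
  constructor
  · rintro ⟨hω : F.piecewise τ ω ∈ cyl J ρ, hωσ⟩ e he
    by_cases heF : e ∈ F
    · rw [F.piecewise_eq_of_mem _ _ heF, hωσ e (hF heF)]
    · rw [F.piecewise_eq_of_notMem _ _ heF, ← hω e he, F.piecewise_eq_of_notMem _ _ heF]
  · refine fun hω => ⟨show F.piecewise τ ω ∈ cyl J ρ from fun e he => ?_,
      fun e he => (hω e (hJ he)).trans (hρσ e he)⟩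
    by_cases heF : e ∈ F
    · rw [F.piecewise_eq_of_mem _ _ heF, hρ e (hF heF)]
    · rw [F.piecewise_eq_of_notMem _ _ heF, hω e he, F.piecewise_eq_of_notMem _ _ heF]

namespace IsGibbs

variable {a b c : ℝ} {μ : Measure Config}

theorem measure_preimage_piecewise_cyl (ha : 0 < a) (hb : 0 < b) (hc : 0 < c)
    (hμ : IsGibbs a b c μ) {F H : Finset HexE} (hFH : F ⊆ H) {ρ σ τ : Config} (hρ : IsConfig ρ)
    (hσ : IsConfig σ) (hστ : ∀ e ∉ F, σ e = τ e) :
    localWeight a b c F τ *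
        μ ((fun ω => F.piecewise τ ω) ⁻¹' cyl (closedNbhd H) ρ ∩ cyl (closedNbhd F) σ) =
      localWeight a b c F σ * μ (cyl (closedNbhd H) ρ ∩ cyl (closedNbhd F) τ) := by
  have hsub : (closedNbhd F : Set HexE) ⊆ closedNbhd H := closedNbhd_mono hFH
  by_cases hρτ : ρ ∈ cyl (closedNbhd F) τ
  · have hpσ := piecewise_mem_cyl_closedNbhd (fun e he => (hστ e he).symm) hρτ
    have hoff (e : HexE) (he : e ∉ F) : F.piecewise σ ρ e = ρ e := F.piecewise_eq_of_notMem _ _ he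
    have hcyl : cyl (closedNbhd H) ρ ∩ cyl (closedNbhd F) τ = cyl (closedNbhd H) ρ :=
      Set.inter_eq_left.2 fun ω hω e he => (hω e (hsub he)).trans (hρτ e he)
    rw [preimage_piecewise_cyl_inter hsub hστ hρτ, hcyl, ← localWeight_congr hρτ,
      ← localWeight_congr hpσ, mul_comm, mul_comm (localWeight a b c F _)]
    exact hμ.measure_cyl_mul_localWeight ha hb hc hFH (isConfig_of_eqOn hρ hσ hoff hpσ) hρ hoff
  · have hdisj {ω : Config} (hω : ω ∈ cyl (closedNbhd F) τ) : ω ∉ cyl (closedNbhd H) ρ :=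
      fun h => hρτ fun e he => (h e (hsub he)).symm.trans (hω e he)
    have hpre : (fun ω => F.piecewise τ ω) ⁻¹' cyl (closedNbhd H) ρ ∩ cyl (closedNbhd F) σ = ∅ :=
      Set.eq_empty_of_forall_notMem fun ω hω =>
        hdisj (piecewise_mem_cyl_closedNbhd hστ hω.2) hω.1
    rw [hpre, (Set.disjoint_right.2 fun _ => hdisj).inter_eq, measure_empty, mul_zero, mul_zero]

theorem map_piecewise_restrict_cyl (ha : 0 < a) (hb : 0 < b) (hc : 0 < c) (hμ : IsGibbs a b c μ)
    {F : Finset HexE} {σ τ : Config} (hσ : IsConfig σ) (hτ : IsConfig τ)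
    (hστ : ∀ e ∉ F, σ e = τ e) :
    localWeight a b c F τ • (μ.restrict (cyl (closedNbhd F) σ)).map (fun ω => F.piecewise τ ω) =
      localWeight a b c F σ • μ.restrict (cyl (closedNbhd F) τ) := by
  have := hμ.1
  have hm := measurable_piecewise_config F τ
  have hfin := Measure.smul_finite
    ((μ.restrict (cyl (closedNbhd F) σ)).map fun ω => F.piecewise τ ω)
    (localWeight_ne_top a b c F τ)
  refine measure_ext_of_cyl (P := {ω | IsConfig ω}) ?_ ?_ fun I =>
    ⟨closedNbhd (I ∪ F), Finset.subset_union_left.trans (subset_closedNbhd _), fun ρ hρ => ?_⟩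
  · have hs := measurableSet_isConfig.compl
    rw [Measure.smul_apply, Measure.map_apply hm hs, Measure.restrict_apply (hm hs), smul_eq_mul]
    refine mul_eq_zero_of_right _ (measure_mono_null ?_ hμ.measure_isConfig_compl)
    exact fun ω hω hcfg => hω.1 (isConfig_of_eqOn hcfg hτ (fun _ => F.piecewise_eq_of_notMem _ _)
      (piecewise_mem_cyl_closedNbhd hστ hω.2))
  · rw [Measure.smul_apply, smul_eq_mul]
    exact mul_eq_zero_of_right _ (Measure.restrict_le_self.absolutelyContinuous
      hμ.measure_isConfig_compl)
  · have hs := measurableSet_cyl (closedNbhd (I ∪ F)) ρ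
    rw [Measure.smul_apply, Measure.map_apply hm hs, Measure.restrict_apply (hm hs),
      Measure.smul_apply, Measure.restrict_apply hs, smul_eq_mul, smul_eq_mul]
    exact hμ.measure_preimage_piecewise_cyl ha hb hc Finset.subset_union_right hρ hσ hστ

theorem quasiMeasurePreserving_piecewise (ha : 0 < a) (hb : 0 < b) (hc : 0 < c)
    (hμ : IsGibbs a b c μ) {F : Finset HexE} {φ : Config}
    (hφ : ∀ ω, IsConfig ω → IsConfig (F.piecewise φ ω)) :
    Measure.QuasiMeasurePreserving (fun ω => F.piecewise φ ω) μ μ := by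
  have hm := measurable_piecewise_config F φ
  refine ⟨hm, .mk fun T hT hT₀ => ?_⟩
  rw [Measure.map_apply hm hT, ← measure_sdiff_null hμ.measure_isConfig_compl]
  refine measure_null_of_locally_null _ fun σ ⟨_, hσ⟩ => ⟨_, Filter.inter_mem
    (Filter.mem_of_superset self_mem_nhdsWithin Set.sdiff_subset) (mem_nhdsWithin_of_mem_nhds
      ((isOpen_cyl (closedNbhd F) σ).mem_nhds fun _ _ => rfl)), ?_⟩
  have hσ : IsConfig σ := not_not.1 hσ
  have hmap := congrArg (· T) (hμ.map_piecewise_restrict_cyl ha hb hc hσ (hφ σ hσ)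
    fun e he => (F.piecewise_eq_of_notMem φ σ he).symm)
  simp only [Finset.piecewise_idem_left, Measure.smul_apply, smul_eq_mul, Measure.map_apply hm hT,
    Measure.restrict_apply (hm hT), Measure.restrict_apply hT,
    measure_inter_null_of_null_left _ hT₀, mul_zero] at hmap
  exact (mul_eq_zero.1 hmap).resolve_left (localWeight_ne_zero ha hb hc F (hφ σ hσ))

end IsGibbs

end Gibbs

section Modification

variable {V κ : Type*} {G : SimpleGraph V}

theorem exists_infinite_reachable_sdiff {S B : Set V} (hB : B.Finite)
    (hbdry : {u | u ∉ B ∧ ∃ r ∈ B, G.Adj u r}.Finite) {v : V} (hv : v ∈ S ∩ B)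
    (hinf : {w | (restrictTo G S).Reachable v w}.Infinite) :
    ∃ u ∈ S \ B, (restrictTo G S).Reachable v u ∧ (∃ r ∈ B, G.Adj u r) ∧
      {w | (restrictTo G (S \ B)).Reachable u w}.Infinite := by
  by_contra! hfin
  refine hinf ((hB.union (hbdry.biUnion (t := fun u =>
    {w | u ∈ S ∧ (restrictTo G S).Reachable v u ∧ (restrictTo G (S \ B)).Reachable u w})
      fun u hu => ?_)).subset fun w hw => or_iff_not_imp_left.2 fun hwB => ?_)
  · by_cases h : u ∈ S ∧ (restrictTo G S).Reachable v u
    · exact (hfin u ⟨h.1, hu.1⟩ h.2 hu.2).subset fun w hw => hw.2.2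
    · exact Set.finite_empty.subset fun w hw => h ⟨hw.1, hw.2.1⟩
  · obtain ⟨x, hx, y, hy, hwx, hxy⟩ := exists_adj_exit (P := Bᶜ) hw.symm hwB (not_not.2 hv.2)
    have hyB : y ∈ B := not_not.1 hy
    rw [restrictTo_restrictTo, ← Set.sdiff_eq] at hwx
    rw [restrictTo_adj] at hxy
    exact Set.mem_biUnion ⟨hx, y, hyB, hxy.1⟩ ⟨hxy.2.1,
      hw.trans (reachable_restrictTo_of_subset Set.sdiff_subset hwx), hwx.symm⟩

theorem isBranching_of_modification {S S' B W X : Set V} {u : κ → V} (hWB : W ⊆ B)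
    (hS : ∀ v ∉ B, v ∈ S' ↔ v ∈ S)
    (hconn : ∀ v ∈ S' ∩ W, ∀ w ∈ S' ∩ W, (restrictTo G (S' ∩ W)).Reachable v w)
    (hattach : ∀ v ∈ S \ B, v ∉ X → ∀ r ∈ B, G.Adj v r → r ∈ S' ∩ W)
    (hu : ∀ k, u k ∈ S \ B) (hadj : ∀ k, ∃ r ∈ B, G.Adj (u k) r)
    (hinf : ∀ k, {w | (restrictTo G (S \ B)).Reachable (u k) w}.Infinite)
    (hX : ∀ k, ∀ x ∈ X, ¬(restrictTo G S).Reachable (u k) x)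
    (hsep : Pairwise fun k l => ¬(restrictTo G S).Reachable (u k) (u l)) :
    IsBranching G S' W u where
  window_connected := hconn
  mem k := ⟨(hS _ (hu k).2).2 (hu k).1, fun hW => (hu k).2 (hWB hW)⟩
  exists_adj k := by
    obtain ⟨r, hr, hur⟩ := hadj k
    exact ⟨r, hattach _ (hu k) (fun h => hX k _ h .rfl) r hr hur, hur⟩
  infinite k := by
    have hsub : S \ B ⊆ S' \ W := fun v hv => ⟨(hS v hv.2).2 hv.1, fun hW => hv.2 (hWB hW)⟩
    exact (hinf k).mono fun w hw => reachable_restrictTo_of_subset hsub hw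
  separated k l hkl hreach := by
    let P : Set V := {z | z ∉ B ∧ (restrictTo G S).Reachable (u k) z}
    refine hsep hkl (mem_and_reachable_of_forall_adj (P := P) (H := restrictTo G S)
      (fun x hx y hxy => ?_)
      (show u k ∈ P from ⟨(hu k).2, .rfl⟩) hreach).1.2
    rw [restrictTo_adj] at hxy
    have hxS : x ∈ S := (hS x hx.1).1 hxy.2.1.1
    have hyB : y ∉ B := fun hy =>
      hxy.2.2.2 (hattach x ⟨hxS, hx.1⟩ (fun h => hX k x h hx.2) y hy hxy.1).2
    have hadj' : (restrictTo G S).Adj x y :=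
      restrictTo_adj.2 ⟨hxy.1, hxS, (hS y hyB).1 hxy.2.2.1⟩
    exact ⟨⟨hyB, hx.2.trans hadj'.reachable⟩, hadj'⟩

theorem exists_embedding_forall_not_reachable {m N : ℕ} {r : Fin N → V}
    (hr : Pairwise fun i j => ¬G.Reachable (r i) (r j)) {X : Finset V} (hX : m + X.card ≤ N) :
    ∃ e : Fin m ↪ Fin N, ∀ k, ∀ x ∈ X, ¬G.Reachable (r (e k)) x := by
  classical
  let bad : Finset (Fin N) := {i | ∃ x ∈ X, G.Reachable (r i) x}
  have hbad : bad.card ≤ X.card :=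
    Finset.card_le_card_of_forall_subsingleton (fun i x => G.Reachable (r i) x)
      (fun i hi => (Finset.mem_filter.1 hi).2)
      fun x _ i hi j hj => by_contra fun hij => hr hij (hi.2.trans hj.2.symm)
  have hgood : m ≤ badᶜ.card := by
    rw [Finset.card_compl, Fintype.card_fin]
    omega
  refine ⟨(badᶜ.orderEmbOfCardLe hgood).toEmbedding, fun k x hx hreach => ?_⟩
  exact Finset.mem_compl.1 (Finset.orderEmbOfCardLe_mem badᶜ hgood k)
    (Finset.mem_filter.2 ⟨Finset.mem_univ _, x, hx, hreach⟩)

theorem reachable_restrictTo_of_exists_adj_lt {T : Set V} {root : V} (f : V → ℕ)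
    (h : ∀ v ∈ T, v ≠ root → ∃ w ∈ T, G.Adj v w ∧ f w < f v) {v : V} (hv : v ∈ T) :
    (restrictTo G T).Reachable v root := by
  induction hn : f v using Nat.strong_induction_on generalizing v with
  | _ n ih =>
    by_cases hroot : v = root
    · exact hroot ▸ .rfl
    · obtain ⟨w, hw, hvw, hlt⟩ := h v hv hroot
      exact (restrictTo_adj.2 ⟨hvw, hv, hw⟩ : (restrictTo G T).Adj v w).reachable.trans
        (ih (f w) (hn ▸ hlt) hw rfl)

end Modification

section Filling

/-- The edges of the box `B_n(0,0)` that are rewritten by `fill`: all edges with both endpoints in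
the box, except the two `a`-type edges ending at a vertex with no other neighbour in the box. -/
noncomputable def fillRegion (n : ℕ) : Finset HexE :=
  (Finset.Icc (-n : ℤ) n ×ˢ Finset.Icc (-n : ℤ) n ×ˢ Finset.univ).filter fun e =>
    (e.2.2 = 0 → (-n < e.1 ∨ -n < e.2.1) ∧ (e.1 < n ∨ e.2.1 < n)) ∧
      (e.2.2 = 1 → e.1 < n) ∧ (e.2.2 = 2 → e.2.1 < n)

/-- The states written by `fill`: every `a`-type edge present, every other edge absent, except near
the two corners of the box, where six edges are flipped so that every vertex keeps both a present
and an absent edge whatever the configuration outside the box. -/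
def fillPattern (n : ℤ) : Config := fun e =>
  decide (if e.2.2 = 0 then e ≠ (1 - n, -n, 0) ∧ e ≠ (n - 1, n, 0)
    else e = (-n, -n, 1) ∨ e = (n - 1, n, 1) ∨ e = (1 - n, -n, 2) ∨ e = (n - 1, n - 1, 2))

/-- The local modification of `ω` that opens the box `B_n(0,0)` up to its boundary. -/
noncomputable def fill (n : ℕ) (ω : Config) : Config :=
  (fillRegion n).piecewise (fillPattern n) ω

/-- The box `B_n(0,0)` without the `2 × 2` blocks at the two corners altered in `fillPattern`. -/
def fillWindow (n : ℕ) : Set HexV :=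
  {v | v ∈ box n 0 0 ∧ (1 - (n : ℤ) < v.1 ∨ 1 - (n : ℤ) < v.2.1) ∧
    (v.1 < (n : ℤ) - 1 ∨ v.2.1 < (n : ℤ) - 1)}

/-- The vertices outside the box `B_n(0,0)` adjacent to a vertex of the box off `fillWindow n`. -/
def fillExceptions (n : ℤ) : Finset HexV :=
  {(-n - 1, -n, true), (-n - 1, 1 - n, true), (-n, -n - 1, true), (1 - n, -n - 1, true),
    (n + 1, n, false), (n + 1, n - 1, false), (n, n + 1, false), (n - 1, n + 1, false)}

variable {n : ℕ} {ω : Config} {x y m : ℤ}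

theorem card_fillExceptions_le (n : ℤ) : (fillExceptions n).card ≤ 8 :=
  (Finset.card_insert_le _ _).trans <| Nat.succ_le_succ <|
    (Finset.card_insert_le _ _).trans <| Nat.succ_le_succ Finset.card_le_six

theorem exists_fin_three {p : Fin 3 → Prop} : (∃ i, p i) ↔ p 0 ∨ p 1 ∨ p 2 := by
  simp [Fin.exists_fin_succ]

theorem edgesAt_true (i : Fin 3) : edgesAt (x, y, true) i = (x, y, i) :=
  rfl

theorem edgesAt_false_zero : edgesAt (x, y, false) 0 = (x, y, 0) :=
  rfl

theorem edgesAt_false_one : edgesAt (x, y, false) 1 = (x - 1, y, 1) :=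
  rfl

theorem edgesAt_false_two : edgesAt (x, y, false) 2 = (x, y - 1, 2) :=
  rfl

theorem mem_fillRegion_a : (x, y, 0) ∈ fillRegion n ↔
    ((-n ≤ x ∧ x ≤ n) ∧ -n ≤ y ∧ y ≤ n) ∧ (-n < x ∨ -n < y) ∧ (x < n ∨ y < n) := by
  simp [fillRegion]

theorem mem_fillRegion_b : (x, y, 1) ∈ fillRegion n ↔
    ((-n ≤ x ∧ x ≤ n) ∧ -n ≤ y ∧ y ≤ n) ∧ x < n := by
  simp [fillRegion]

theorem mem_fillRegion_c : (x, y, 2) ∈ fillRegion n ↔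
    ((-n ≤ x ∧ x ≤ n) ∧ -n ≤ y ∧ y ≤ n) ∧ y < n := by
  simp [fillRegion]

theorem fillPattern_a : fillPattern m (x, y, 0) = true ↔
    ¬(x = 1 - m ∧ y = -m) ∧ ¬(x = m - 1 ∧ y = m) := by
  simp [fillPattern, imp_iff_not_or]

theorem fillPattern_b : fillPattern m (x, y, 1) = true ↔
    (x = -m ∧ y = -m) ∨ (x = m - 1 ∧ y = m) := by
  simp [fillPattern]

theorem fillPattern_c : fillPattern m (x, y, 2) = true ↔
    (x = 1 - m ∧ y = -m) ∨ (x = m - 1 ∧ y = m - 1) := by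
  simp [fillPattern]

theorem mem_fillWindow_iff {t : Bool} : (x, y, t) ∈ fillWindow n ↔
    ((-n ≤ x ∧ x ≤ n) ∧ -n ≤ y ∧ y ≤ n) ∧ (1 - n < x ∨ 1 - n < y) ∧ (x < n - 1 ∨ y < n - 1) :=
  and_congr_left' mem_box_zero

theorem one_le_card_and_card_le_two_iff {f : Fin 3 → Bool} :
    (1 ≤ (Finset.univ.filter fun i => f i = true).card ∧
      (Finset.univ.filter fun i => f i = true).card ≤ 2) ↔
    (∃ i, f i = true) ∧ ∃ i, f i = false := by
  revert f
  decide

theorem isConfig_piecewise {F : Finset HexE} {φ : Config}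
    (h : ∀ v ∈ verts F, (∃ i, edgesAt v i ∈ F ∧ φ (edgesAt v i) = true) ∧
      ∃ i, edgesAt v i ∈ F ∧ φ (edgesAt v i) = false) (hω : IsConfig ω) :
    IsConfig (F.piecewise φ ω) := by
  intro v
  by_cases hv : v ∈ verts F
  · obtain ⟨⟨i, hiF, hi⟩, j, hjF, hj⟩ := h v hv
    exact one_le_card_and_card_le_two_iff.2 ⟨⟨i, (F.piecewise_eq_of_mem _ _ hiF).trans hi⟩,
      j, (F.piecewise_eq_of_mem _ _ hjF).trans hj⟩
  · exact localConf_eq_of_notMem_verts (fun e => F.piecewise_eq_of_notMem φ ω) hv ▸ hω v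

theorem isConfig_fill (hn : 2 ≤ n) (hω : IsConfig ω) : IsConfig (fill n ω) := by
  refine isConfig_piecewise ?_ hω
  rintro ⟨x, y, _ | _⟩ hv <;>
    simp only [mem_verts_iff, exists_fin_three, edgesAt_true, edgesAt_false_zero,
      edgesAt_false_one, edgesAt_false_two, mem_fillRegion_a, mem_fillRegion_b, mem_fillRegion_c,
      ← Bool.not_eq_true, fillPattern_a, fillPattern_b, fillPattern_c] at hv ⊢ <;>
    omega

theorem mem_confSet_conf001_iff {v : HexV} : v ∈ confSet ω conf001 ↔
    ω (edgesAt v 0) = true ∧ ω (edgesAt v 1) = false ∧ ω (edgesAt v 2) = false := by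
  simp [confSet, localConf, conf001, funext_iff, Fin.forall_fin_succ]

theorem mem_box_of_mem_verts_fillRegion {v : HexV} (hv : v ∈ verts (fillRegion n)) :
    v ∈ box n 0 0 := by
  obtain ⟨x, y, _ | _⟩ := v <;>
    simp only [mem_verts_iff, exists_fin_three, edgesAt_true, edgesAt_false_zero,
      edgesAt_false_one, edgesAt_false_two, mem_fillRegion_a, mem_fillRegion_b, mem_fillRegion_c,
      mem_box_zero] at hv ⊢ <;>
    omega

theorem mem_confSet_fill_iff_of_notMem_box {v : HexV} (hv : v ∉ box n 0 0) :
    v ∈ confSet (fill n ω) conf001 ↔ v ∈ confSet ω conf001 := by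
  have h : localConf (fill n ω) v = localConf ω v :=
    localConf_eq_of_notMem_verts (fun e => (fillRegion n).piecewise_eq_of_notMem _ _)
      (mt mem_box_of_mem_verts_fillRegion hv)
  rw [confSet, confSet, Set.mem_ofPred_eq, Set.mem_ofPred_eq, h]

theorem mem_confSet_fill_iff_true (hv : (x, y, true) ∈ fillWindow n) :
    (x, y, true) ∈ confSet (fill n ω) conf001 ↔
      (x = n → ω (x, y, 1) = false) ∧ (y = n → ω (x, y, 2) = false) := by
  rw [mem_fillWindow_iff] at hv
  simp only [mem_confSet_conf001_iff, edgesAt_true, fill, Finset.piecewise,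
    mem_fillRegion_a, mem_fillRegion_b, mem_fillRegion_c]
  grind [fillPattern_a, fillPattern_b, fillPattern_c]

theorem mem_confSet_fill_iff_false (hv : (x, y, false) ∈ fillWindow n) :
    (x, y, false) ∈ confSet (fill n ω) conf001 ↔
      (x = -n → ω (x - 1, y, 1) = false) ∧ (y = -n → ω (x, y - 1, 2) = false) := by
  rw [mem_fillWindow_iff] at hv
  simp only [mem_confSet_conf001_iff, edgesAt_false_zero, edgesAt_false_one,
    edgesAt_false_two, fill, Finset.piecewise,
    mem_fillRegion_a, mem_fillRegion_b, mem_fillRegion_c]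
  grind [fillPattern_a, fillPattern_b, fillPattern_c]

theorem fillWindow_subset_box (n : ℕ) : fillWindow n ⊆ box n 0 0 :=
  fun _ hv => hv.1

/-- A potential on the vertices that decreases along a path in the open part of the filled window
to the vertex `(0, 0, true)`. -/
def windowPotential (v : HexV) : ℕ :=
  if v.2.2 then (6 * v.1 + 1).natAbs + (6 * v.2.1 + 1).natAbs
  else (6 * v.1 - 1).natAbs + (6 * v.2.1 - 1).natAbs + 1

theorem windowPotential_true :
    windowPotential (x, y, true) = (6 * x + 1).natAbs + (6 * y + 1).natAbs :=
  rfl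

theorem windowPotential_false :
    windowPotential (x, y, false) = (6 * x - 1).natAbs + (6 * y - 1).natAbs + 1 :=
  rfl

theorem exists_adj_windowPotential_lt_true (hn : 2 ≤ n) (hv : (x, y, true) ∈ fillWindow n)
    (hroot : ¬(x = 0 ∧ y = 0)) :
    ∃ w ∈ confSet (fill n ω) conf001 ∩ fillWindow n, hexGraph.Adj (x, y, true) w ∧
      windowPotential w < windowPotential (x, y, true) := by
  suffices ∃ x' y' : ℤ, ((x', y', false) : HexV) ∈ fillWindow n ∧ -n < x' ∧ -n < y' ∧
      hexGraph.Adj (x, y, true) (x', y', false) ∧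
      windowPotential (x', y', false) < windowPotential (x, y, true) by
    obtain ⟨x', y', hw, hx', hy', hadj⟩ := this
    exact ⟨_, ⟨(mem_confSet_fill_iff_false hw).2 ⟨fun h => by omega, fun h => by omega⟩, hw⟩, hadj⟩
  simp only [mem_fillWindow_iff, windowPotential_true, windowPotential_false,
    hexGraph_adj_true_false] at hv ⊢
  by_cases hneg : x < 0 ∨ y < 0
  · obtain hxy | hxy := le_or_gt x y
    · exact ⟨x + 1, y, by omega⟩
    · exact ⟨x, y + 1, by omega⟩
  · exact ⟨x, y, by omega⟩

theorem exists_adj_windowPotential_lt_false (hn : 2 ≤ n) (hv : (x, y, false) ∈ fillWindow n) :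
    ∃ w ∈ confSet (fill n ω) conf001 ∩ fillWindow n, hexGraph.Adj (x, y, false) w ∧
      windowPotential w < windowPotential (x, y, false) := by
  suffices ∃ x' y' : ℤ, ((x', y', true) : HexV) ∈ fillWindow n ∧ x' < n ∧ y' < n ∧
      hexGraph.Adj (x, y, false) (x', y', true) ∧
      windowPotential (x', y', true) < windowPotential (x, y, false) by
    obtain ⟨x', y', hw, hx', hy', hadj⟩ := this
    exact ⟨_, ⟨(mem_confSet_fill_iff_true hw).2 ⟨fun h => by omega, fun h => by omega⟩, hw⟩, hadj⟩
  simp only [mem_fillWindow_iff, windowPotential_true, windowPotential_false,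
    hexGraph_adj_false_true] at hv ⊢
  by_cases hpos : 0 < x ∨ 0 < y
  · obtain hxy | hxy := le_or_gt y x
    · exact ⟨x - 1, y, by omega⟩
    · exact ⟨x, y - 1, by omega⟩
  · exact ⟨x, y, by omega⟩

theorem reachable_confSet_fill_inter_fillWindow (hn : 2 ≤ n) {v w : HexV}
    (hv : v ∈ confSet (fill n ω) conf001 ∩ fillWindow n)
    (hw : w ∈ confSet (fill n ω) conf001 ∩ fillWindow n) :
    (restrictTo hexGraph (confSet (fill n ω) conf001 ∩ fillWindow n)).Reachable v w := by
  have hroot {v : HexV} (hv : v ∈ confSet (fill n ω) conf001 ∩ fillWindow n) :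
      (restrictTo hexGraph (confSet (fill n ω) conf001 ∩ fillWindow n)).Reachable v
        (0, 0, true) := by
    refine reachable_restrictTo_of_exists_adj_lt windowPotential ?_ hv
    rintro ⟨x, y, _ | _⟩ ⟨-, hv⟩ hne
    · exact exists_adj_windowPotential_lt_false hn hv
    · exact exists_adj_windowPotential_lt_true hn hv (by simpa using hne)
  exact (hroot hv).trans (hroot hw).symm

theorem mem_fillWindow_of_adj {v r : HexV} (hv : v ∉ box n 0 0) (hvX : v ∉ fillExceptions n)
    (hr : r ∈ box n 0 0) (hadj : hexGraph.Adj v r) : r ∈ fillWindow n := by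
  obtain ⟨x, y, _ | _⟩ := v <;> obtain ⟨x', y', _ | _⟩ := r <;>
    simp only [fillExceptions, Finset.mem_insert, Finset.mem_singleton, Prod.mk.injEq,
      mem_fillWindow_iff, mem_box_zero, hexGraph_adj_true_false, hexGraph_adj_false_true,
      not_hexGraph_adj_same, and_true, and_false, reduceCtorEq]
      at hv hvX hr hadj ⊢ <;>
    omega

theorem mem_confSet_fill_of_adj {v r : HexV} (hv : v ∈ confSet ω conf001 \ box n 0 0)
    (hr : r ∈ fillWindow n) (hadj : hexGraph.Adj v r) : r ∈ confSet (fill n ω) conf001 := by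
  obtain ⟨hvω, hvB⟩ := hv
  rw [mem_confSet_conf001_iff] at hvω
  rw [mem_box_zero] at hvB
  obtain ⟨x, y, _ | _⟩ := v <;> obtain ⟨x', y', _ | _⟩ := r
  · exact absurd hadj not_hexGraph_adj_same
  · grind [mem_confSet_fill_iff_true, mem_fillWindow_iff, edgesAt, hexGraph_adj_false_true]
  · grind [mem_confSet_fill_iff_false, mem_fillWindow_iff, edgesAt, hexGraph_adj_true_false]
  · exact absurd hadj not_hexGraph_adj_same

theorem finite_adj_box (n : ℕ) : {u | u ∉ box n 0 0 ∧ ∃ r ∈ box n 0 0, hexGraph.Adj u r}.Finite :=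
  (boxFinset (n + 1) \ boxFinset n).finite_toSet.subset fun _ hu =>
    mem_boxFinset_sdiff_of_adj hu.1 hu.2

theorem hasTrifurcation_fill (hn : 2 ≤ n) {r : Fin 3 → HexV}
    (hr : ∀ k, r k ∈ confSet ω conf001 ∩ box n 0 0)
    (hinf : ∀ k, {w | (restrictTo hexGraph (confSet ω conf001)).Reachable (r k) w}.Infinite)
    (hsep : Pairwise fun k l => ¬(restrictTo hexGraph (confSet ω conf001)).Reachable (r k) (r l))
    (hX : ∀ k, ∀ x ∈ fillExceptions n,
      ¬(restrictTo hexGraph (confSet ω conf001)).Reachable (r k) x) :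
    HasTrifurcation hexGraph (confSet (fill n ω) conf001) (fillWindow n) := by
  choose u hu hru hadj hu_inf using fun k =>
    exists_infinite_reachable_sdiff (finite_box_zero n) (finite_adj_box n) (hr k) (hinf k)
  refine ⟨u, isBranching_of_modification (X := fillExceptions n) (fillWindow_subset_box n)
    (fun v => mem_confSet_fill_iff_of_notMem_box)
    (fun v hv w hw => reachable_confSet_fill_inter_fillWindow hn hv hw)
    (fun v hv hvX r hr hvr => ?_) hu hadj hu_inf (fun k x hx hux => hX k x hx ((hru k).trans hux))
    fun k l hkl hkl' => hsep hkl ((hru k).trans (hkl'.trans (hru l).symm))⟩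
  have hrW := mem_fillWindow_of_adj hv.2 hvX hr hvr
  exact ⟨mem_confSet_fill_of_adj hv hrW hvr, hrW⟩

theorem mem_compOf_iff {S : Set HexV} {v w : HexV} :
    w ∈ compOf S v ↔ (restrictTo hexGraph S).Reachable v w := by
  rw [SimpleGraph.reachable_iff_reflTransGen]
  rfl

theorem exists_separated_of_numInfClusters_eq_top {τ : Fin 3 → Bool}
    (h : numInfClusters ω τ = ⊤) :
    ∃ r : ℕ → HexV, (∀ k, r k ∈ confSet ω τ) ∧
      (∀ k, {w | (restrictTo hexGraph (confSet ω τ)).Reachable (r k) w}.Infinite) ∧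
      Pairwise fun k l => ¬(restrictTo hexGraph (confSet ω τ)).Reachable (r k) (r l) := by
  let C := (Set.encard_eq_top_iff.1 h).natEmbedding
  choose r hr hC using fun k => (C k).2.1
  have hC' (k : ℕ) : (C k : Set HexV) =
      {w | (restrictTo hexGraph (confSet ω τ)).Reachable (r k) w} :=
    (hC k).trans (Set.ext fun w => mem_compOf_iff)
  refine ⟨r, hr, fun k => hC' k ▸ (C k).2.2, fun k l hkl hreach => hkl (C.injective ?_)⟩
  refine Subtype.ext ((hC' k).trans ((Set.ext fun w => ?_).trans (hC' l).symm))
  exact ⟨hreach.symm.trans, hreach.trans⟩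

theorem exists_forall_mem_box {ι : Type*} [Finite ι] (r : ι → HexV) (m : ℕ) :
    ∃ n ≥ m, ∀ i, r i ∈ box n 0 0 := by
  have hr (i : ι) : ∀ᶠ n : ℕ in Filter.atTop, r i ∈ box n 0 0 := by
    filter_upwards [Filter.eventually_ge_atTop ((r i).1.natAbs + (r i).2.1.natAbs)] with n hn
    rw [mem_box_zero]
    omega
  exact ((Filter.eventually_ge_atTop m).and (Filter.eventually_all.2 hr)).exists

theorem exists_hasTrifurcation_fill (h : numInfClusters ω conf001 = ⊤) :
    ∃ n ≥ 2, HasTrifurcation hexGraph (confSet (fill n ω) conf001) (fillWindow n) := by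
  obtain ⟨r, hrS, hinf, hsep⟩ := exists_separated_of_numInfClusters_eq_top h
  obtain ⟨n, hn, hbox⟩ := exists_forall_mem_box (fun i : Fin (3 + 8) => r i) 2
  obtain ⟨e, he⟩ := exists_embedding_forall_not_reachable
    (hsep.comp_of_injective Fin.val_injective)
    (Nat.add_le_add_left (card_fillExceptions_le n) 3)
  exact ⟨n, hn, hasTrifurcation_fill hn (fun k => ⟨hrS _, hbox (e k)⟩) (fun k => hinf _)
    ((hsep.comp_of_injective Fin.val_injective).comp_of_injective e.injective) he⟩

end Filling

theorem no_infinitely_many_infinite_001_clusters_general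
    (a b c : ℝ) (ha : 0 < a) (hb : 0 < b) (hc : 0 < c)
    (μ : Measure Config) (hGibbs : IsGibbs a b c μ) (hTI : TransInvariant μ) :
    μ {ω : Config | numInfClusters ω conf001 = ⊤} = 0 := by
  have := hGibbs.1
  let T (n : ℕ) : Set Config := {ω | HasTrifurcation hexGraph (confSet ω conf001) (fillWindow n)}
  have hT (n : ℕ) (hn : 2 ≤ n) : μ (fill n ⁻¹' T n) = 0 :=
    (hGibbs.quasiMeasurePreserving_piecewise ha hb hc fun ω => isConfig_fill hn).preimage_null
      (measure_hasTrifurcation_eq_zero hTI conf001 (fillWindow_subset_box n))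
  refine measure_mono_null (t := ⋃ n, ⋃ _ : 2 ≤ n, fill n ⁻¹' T n) (fun ω hω => ?_)
    (measure_iUnion_null fun n => measure_iUnion_null (hT n))
  obtain ⟨n, hn, hω⟩ := exists_hasTrifurcation_fill hω
  exact Set.mem_iUnion₂.2 ⟨n, hn, hω⟩

/-- for an ergodic translation-invariant Gibbs measure, almost surely the number
of infinite `{001}`-clusters is not infinite. -/
theorem no_infinitely_many_infinite_001_clusters
    (a b c : ℝ) (ha : 0 < a) (hb : 0 < b) (hc : 0 < c)
    (μ : Measure Config) (hGibbs : IsGibbs a b c μ) (hTI : TransInvariant μ)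
    (hErg : IsErgodicTI μ) :
    μ {ω : Config | numInfClusters ω conf001 = ⊤} = 0 :=
  no_infinitely_many_infinite_001_clusters_general a b c ha hb hc μ hGibbs hTI
end
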